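/- Let μ ∈ (0,∞) and a > 0 be fixed and let F_T, F_Λ, F_B be probability distributions on [0,∞) (the distributions of nonnegative random variables T, Λ, B). Then the conditions 0 ≤ E[T] < 1, E[Λ] = 1/a, E[Λ²] < ∞ and 0 ≤ E[B] < ∞ hold if and only if the functional equation F̂(s) = ∫₀^∞ (1 + λ·σ_B(σ(s)))^{−a} dF_Λ(λ) for all s ≥ 0 has exactly one solution: a probability distribution F on [0,∞) with mean μ and finite second moment (here σ is built from the unknown F, F_T and μ, and σ_B from F_B). Moreover, the unique solution F satisfies Var[F] = ((a²·Var[Λ] + a·E[Λ²] + E[B] + E[T])/(1 − E[T]))·μ². -/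

import Mathlib

/-! The right-hand side of the functional equation is `ρ̂ (σ_B (σ s))`, where `ρ` is the law of `Λ Γ`
with `Γ` a standard gamma variable of shape `a` independent of `Λ` (`gammaMix`): integrating
`e^{-λ y Γ}` over `Γ` gives `(1 + λ y)^{-a}`. Moreover `σ_B` is the transform `σ` built from the
point mass at `1` and `F_B` (`sigmaB_eq`), so both inner maps are of the same kind.

*Conditions imply existence and uniqueness.* The function `σ` is a limit of exponents
`ν̂(0) - ν̂(s)` with `ν` a finite measure, so `ρ̂ ∘ σ` is a limit of transforms of mixed compound
Poisson laws; tightness makes the limit a Laplace transform (`exists_compound`,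
`exists_of_tendsto_LS`, `exists_subord`). Applied twice this shows that the right-hand side is the
transform of a law, and a second-order bound at `0` shows that its mean is again `μ` and its
second moment finite (`exists_next`). On laws with mean `μ` and finite second moment, the
distance `sup_s |F̂(s) - Ĝ(s)| / s²` is finite, and the map contracts it by the factor `E[T] < 1`,
because `ρ̂` and `σ_B` are `1`-Lipschitz and the division by `t` in `σ` turns `(ts)²` into `t s²`
(`next_contract`). Uniqueness and existence follow as in Banach's fixed point theorem
(`fixed_unique`, `fixed_exists`).

*A solution implies the conditions and the variance formula.* Expand the equation at `s → 0`.
The first order gives that `ρ` has mean `1`, i.e. `E[Λ] = 1/a` (`moment_one`). At the second order,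
`F̂(s) - 1 + μ s = (ρ̂(y) - 1 + y) + (μ s - σ) + (σ - y)` with `σ = σ(s)`, `y = σ_B(σ)`; the three
brackets are nonnegative, and dividing by `s²` gives the identity in `[0,∞]`
`E[X²] = E[(ΛΓ)²] μ² + E[T] E[X²] + E[B] μ²` (`moment_two`). This identity presupposes no finiteness
of the moments of `T`, `Λ` or `B`, so `E[X²] < ∞` and `E[(ΛΓ)²] > 0` force all the moment conditions,
and solving for `E[X²]` gives the variance.
-/

open MeasureTheory

/-- Laplace–Stieltjes transform of a (nonnegative) probability distribution. -/
noncomputable def LS (F : Measure ℝ) (s : ℝ) : ℝ := ∫ x, Real.exp (-(s * x)) ∂F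

/-- `σ(s) = ∫₀^∞ (1 − F̂(ts))/t dF_T(t)`, with the integrand at `t = 0` equal to `μ s`. -/
noncomputable def sigmaT (F FT : Measure ℝ) (μ : ℝ) (s : ℝ) : ℝ :=
  ∫ t, (if t = 0 then μ * s else (1 - LS F (t * s)) / t) ∂FT

/-- The Bernstein function `σ_B(s) = ∫₀^s F̂_B(t) dt`. -/
noncomputable def sigmaB (FB : Measure ℝ) (s : ℝ) : ℝ := ∫ t in (0:ℝ)..s, LS FB t

/-- The moment conditions: `E[T] < 1`, `E[Λ] = 1/a`, `E[Λ²] < ∞`, `E[B] < ∞`. -/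
def Cond (FT FL FB : Measure ℝ) (a : ℝ) : Prop :=
  (∫⁻ t, ENNReal.ofReal t ∂FT) < 1 ∧
  (∫⁻ l, ENNReal.ofReal l ∂FL) = ENNReal.ofReal (1 / a) ∧
  (∫⁻ l, ENNReal.ofReal (l ^ 2) ∂FL) < ⊤ ∧ (∫⁻ b, ENNReal.ofReal b ∂FB) < ⊤

/-- `F` is a solution: a probability distribution on `[0,∞)` with mean `μ`, finite second
moment, satisfying `F̂(s) = ∫₀^∞ (1 + λ σ_B(σ(s)))^{−a} dF_Λ(λ)` for all `s ≥ 0`. -/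
def Sol (FT FL FB : Measure ℝ) (μ a : ℝ) (F : Measure ℝ) : Prop :=
  IsProbabilityMeasure F ∧ F (Set.Iio 0) = 0 ∧ (∫ x, x ∂F) = μ ∧
  Integrable (fun x => x ^ 2) F ∧
  ∀ s : ℝ, 0 ≤ s →
    LS F s = ∫ l, (1 + l * sigmaB FB (sigmaT F FT μ s)) ^ (-a) ∂FL

section Auxiliary

open Filter Topology Set
open scoped ENNReal NNReal

/-! ### Laplace transforms of laws on `[0,∞)` and their expansions at `0` -/

/-- `F` is a probability measure carried by `[0,∞)`. -/
structure IsNNProb (F : Measure ℝ) : Prop where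
  prob : IsProbabilityMeasure F
  supp : F (Set.Iio 0) = 0

namespace IsNNProb

lemma ae_nonneg {F : Measure ℝ} (h : F (Set.Iio 0) = 0) : ∀ᵐ x ∂F, 0 ≤ x := by
  rw [ae_iff]; simpa [Set.Iio] using h

lemma of_ae {F : Measure ℝ} (hp : IsProbabilityMeasure F) (h : ∀ᵐ x ∂F, 0 ≤ x) : IsNNProb F := by
  refine ⟨hp, ?_⟩
  rw [ae_iff] at h; simpa [Set.Iio] using h

end IsNNProb

lemma exp_integrable {F : Measure ℝ} [IsFiniteMeasure F] (h : F (Set.Iio 0) = 0) {s : ℝ}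
    (hs : 0 ≤ s) : Integrable (fun x => Real.exp (-(s * x))) F := by
  refine Integrable.of_bound (C := 1) (by fun_prop) ?_
  filter_upwards [IsNNProb.ae_nonneg h] with x hx
  rw [Real.norm_eq_abs, abs_of_pos (Real.exp_pos _), Real.exp_le_one_iff]
  nlinarith [mul_nonneg hs hx]

lemma LS_nonneg (F : Measure ℝ) (s : ℝ) : 0 ≤ LS F s :=
  integral_nonneg fun _ => (Real.exp_pos _).le

lemma LS_measurable (F : Measure ℝ) [IsFiniteMeasure F] : Measurable (LS F) := by
  have : StronglyMeasurable (fun p : ℝ × ℝ => Real.exp (-(p.1 * p.2))) :=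
    Continuous.stronglyMeasurable (by fun_prop)
  exact (this.integral_prod_right (ν := F)).measurable

lemma LS_zero {F : Measure ℝ} (h : IsProbabilityMeasure F) : LS F 0 = 1 := by
  simp [LS]

lemma LS_dirac (c s : ℝ) : LS (Measure.dirac c) s = Real.exp (-(s * c)) := by
  simp [LS]

lemma LS_anti {F : Measure ℝ} (h : IsNNProb F) {s t : ℝ} (hs : 0 ≤ s) (hst : s ≤ t) :
    LS F t ≤ LS F s := by
  have := h.prob
  refine integral_mono_ae (exp_integrable h.supp (hs.trans hst)) (exp_integrable h.supp hs) ?_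
  filter_upwards [IsNNProb.ae_nonneg h.supp] with x hx
  exact Real.exp_le_exp.2 (by nlinarith)

lemma LS_le_one {F : Measure ℝ} (h : IsNNProb F) {s : ℝ} (hs : 0 ≤ s) : LS F s ≤ 1 := by
  simpa [LS_zero h.prob] using LS_anti h le_rfl hs

/-- `1 - e^{-u} ≤ u` integrated. -/
lemma one_sub_LS_le {F : Measure ℝ} (h : IsNNProb F) (hi : Integrable (fun x => x) F)
    {s : ℝ} (hs : 0 ≤ s) : 1 - LS F s ≤ (∫ x, x ∂F) * s := by
  have := h.prob
  have h1 : (1 : ℝ) = ∫ _, (1:ℝ) ∂F := by simp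
  unfold LS
  rw [h1, ← integral_sub (by simp) (exp_integrable h.supp hs), ← integral_mul_const]
  refine integral_mono ((integrable_const _).sub (exp_integrable h.supp hs)) (hi.mul_const _) ?_
  intro x
  have := Real.add_one_le_exp (-(s * x))
  simp only
  linarith

/-- The transform of a law of mean `m` is `m`-Lipschitz on `[0,∞)`. -/
lemma LS_lip {F : Measure ℝ} (h : IsNNProb F) (hi : Integrable (fun x => x) F)
    {s t : ℝ} (hs : 0 ≤ s) (ht : 0 ≤ t) : |LS F s - LS F t| ≤ (∫ x, x ∂F) * |s - t| := by
  have := h.prob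
  wlog hst : s ≤ t generalizing s t
  · rw [abs_sub_comm, abs_sub_comm s]
    exact this ht hs (le_of_not_ge hst)
  rw [abs_of_nonneg (sub_nonneg.2 (LS_anti h hs hst)), abs_sub_comm, abs_of_nonneg (by linarith)]
  unfold LS
  rw [← integral_sub (exp_integrable h.supp hs) (exp_integrable h.supp ht), ← integral_mul_const]
  refine integral_mono_ae ((exp_integrable h.supp hs).sub (exp_integrable h.supp ht))
    (hi.mul_const _) ?_
  filter_upwards [IsNNProb.ae_nonneg h.supp] with x hx
  have h1 := Real.add_one_le_exp (-((t - s) * x))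
  have h2 : Real.exp (-(t * x)) = Real.exp (-(s * x)) * Real.exp (-((t - s) * x)) := by
    rw [← Real.exp_add]; congr 1; ring
  have h3 : Real.exp (-(s * x)) ≤ 1 := by
    rw [Real.exp_le_one_iff]; nlinarith [mul_nonneg hs hx]
  have h4 := Real.exp_pos (-(s * x))
  have h5 : 0 ≤ (t - s) * x := mul_nonneg (by linarith) hx
  have h6 : 1 - Real.exp (-((t - s) * x)) ≤ (t - s) * x := by linarith
  rw [h2]
  nlinarith

lemma exp_defect_nonneg (u : ℝ) : 0 ≤ Real.exp (-u) - 1 + u := by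
  have := Real.add_one_le_exp (-u); linarith

lemma exp_defect_le {u : ℝ} (hu : 0 ≤ u) : Real.exp (-u) - 1 + u ≤ u ^ 2 / 2 := by
  have h := Real.quadratic_le_exp_of_nonneg hu
  have h2 : (1 - u + u ^ 2 / 2) * (1 + u + u ^ 2 / 2) ≥ 1 := by nlinarith [sq_nonneg (u^2)]
  have h3 : 0 < 1 - u + u ^ 2 / 2 := by nlinarith [sq_nonneg (u - 1)]
  have h4 : Real.exp (-u) * Real.exp u = 1 := by rw [← Real.exp_add]; simp
  have h5 := Real.exp_pos (-u)
  have h6 : 1 ≤ (1 - u + u ^ 2 / 2) * Real.exp u := h2.le.trans (by gcongr)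
  have h7 : Real.exp (-u) ≤ 1 - u + u ^ 2 / 2 := by
    calc Real.exp (-u) = Real.exp (-u) * 1 := by ring
      _ ≤ Real.exp (-u) * ((1 - u + u ^ 2 / 2) * Real.exp u) := by gcongr
      _ = (1 - u + u ^ 2 / 2) * (Real.exp (-u) * Real.exp u) := by ring
      _ = _ := by rw [h4, mul_one]
  linarith

lemma LS_defect_eq {F : Measure ℝ} (h : IsNNProb F) (hi : Integrable (fun x => x) F)
    {s : ℝ} (hs : 0 ≤ s) :
    LS F s - 1 + (∫ x, x ∂F) * s = ∫ x, (Real.exp (-(s * x)) - 1 + s * x) ∂F := by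
  have := h.prob
  have he := exp_integrable h.supp hs
  have h1 : ∫ x, (Real.exp (-(s * x)) - 1) ∂F = LS F s - 1 := by
    rw [integral_sub he (integrable_const _)]; simp [LS]
  rw [integral_add (f := fun x => Real.exp (-(s * x)) - 1) (he.sub (integrable_const _))
    (hi.const_mul _), h1, integral_const_mul]
  ring

lemma LS_defect_nonneg {F : Measure ℝ} (h : IsNNProb F) (hi : Integrable (fun x => x) F)
    {s : ℝ} (hs : 0 ≤ s) : 0 ≤ LS F s - 1 + (∫ x, x ∂F) * s := by
  rw [LS_defect_eq h hi hs]
  exact integral_nonneg fun x => exp_defect_nonneg _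

lemma LS_defect_le {F : Measure ℝ} (h : IsNNProb F) (hi : Integrable (fun x => x) F)
    (hi2 : Integrable (fun x => x ^ 2) F) {s : ℝ} (hs : 0 ≤ s) :
    LS F s - 1 + (∫ x, x ∂F) * s ≤ (∫ x, x ^ 2 ∂F) / 2 * s ^ 2 := by
  have := h.prob
  rw [LS_defect_eq h hi hs, div_mul_eq_mul_div, mul_div_assoc, ← integral_mul_const]
  refine integral_mono_ae (((exp_integrable h.supp hs).sub (integrable_const _)).add
    (hi.const_mul _)) (hi2.mul_const _) ?_
  filter_upwards [IsNNProb.ae_nonneg h.supp] with x hx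
  have := exp_defect_le (mul_nonneg hs hx)
  nlinarith

/-- If `fₙ ≤ g` and `fₙ → g` pointwise, then `∫⁻ fₙ → ∫⁻ g`, even when `∫⁻ g = ∞`. -/
lemma lintegral_tendsto_of_le {α : Type*} [MeasurableSpace α] {ν : Measure α}
    {f : ℕ → α → ℝ≥0∞} {g : α → ℝ≥0∞} (hf : ∀ n, Measurable (f n))
    (hle : ∀ᶠ n in atTop, f n ≤ᵐ[ν] g)
    (ht : ∀ᵐ x ∂ν, Tendsto (fun n => f n x) atTop (𝓝 (g x))) :
    Tendsto (fun n => ∫⁻ x, f n x ∂ν) atTop (𝓝 (∫⁻ x, g x ∂ν)) := by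
  refine tendsto_of_le_liminf_of_limsup_le ?_ ?_
  · calc ∫⁻ x, g x ∂ν = ∫⁻ x, liminf (fun n => f n x) atTop ∂ν :=
          lintegral_congr_ae (ht.mono fun x hx => hx.liminf_eq.symm)
      _ ≤ _ := lintegral_liminf_le hf
  · refine limsup_le_of_le (by isBoundedDefault) ?_
    filter_upwards [hle] with n hn using lintegral_mono_ae hn

lemma exp_first_limit {x : ℝ} {s : ℕ → ℝ} (hs : Tendsto s atTop (𝓝[>] 0)) :
    Tendsto (fun n => (1 - Real.exp (-(s n * x))) / s n) atTop (𝓝 x) := by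
  have h : HasDerivAt (fun u : ℝ => Real.exp (-(u * x))) (-x) 0 := by
    have := ((hasDerivAt_id (0:ℝ)).mul_const x).neg.exp
    simpa using this
  rw [hasDerivAt_iff_tendsto_slope] at h
  have h2 := (h.comp (hs.mono_right (nhdsWithin_mono _ (by intro x hx; exact ne_of_gt hx)))).neg
  rw [neg_neg] at h2
  refine h2.congr fun n => ?_
  simp [slope_def_field]
  ring

lemma exp_second_limit {x : ℝ} {s : ℕ → ℝ} (hs : Tendsto s atTop (𝓝[>] 0)) :
    Tendsto (fun n => (Real.exp (-(s n * x)) - 1 + s n * x) / s n ^ 2) atTop (𝓝 (x ^ 2 / 2)) := by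
  have hs0 : Tendsto s atTop (𝓝 0) := hs.mono_right nhdsWithin_le_nhds
  have hb : ∀ᶠ n in atTop, |(Real.exp (-(s n * x)) - 1 + s n * x) / s n ^ 2 - x ^ 2 / 2|
      ≤ |x| ^ 3 * s n := by
    have h1 : ∀ᶠ n in atTop, |s n * x| ≤ 1 := by
      have := (hs0.mul_const x).abs
      simp only [zero_mul, abs_zero] at this
      exact this.eventually (Iic_mem_nhds one_pos)
    have h2 : ∀ᶠ n in atTop, 0 < s n := hs.eventually self_mem_nhdsWithin
    filter_upwards [h1, h2] with n h1 h2
    have h3 := Real.exp_bound (x := -(s n * x)) (by simpa using h1) (n := 3) (by norm_num)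
    simp only [Finset.sum_range_succ, Finset.sum_range_zero, Nat.factorial] at h3
    norm_num at h3
    have h4 : (Real.exp (-(s n * x)) - 1 + s n * x) / s n ^ 2 - x ^ 2 / 2
        = (Real.exp (-(s n * x)) - (1 + -(s n * x) + (s n * x) ^ 2 / 2)) / s n ^ 2 := by
      field_simp; ring
    rw [h4, abs_div, abs_of_pos (by positivity : 0 < s n ^ 2), div_le_iff₀ (by positivity)]
    refine h3.trans ?_
    rw [abs_of_pos h2]
    have : 0 ≤ |x| ^ 3 * s n ^ 3 := by positivity
    nlinarith
  have h0 : Tendsto (fun n => |x| ^ 3 * s n) atTop (𝓝 0) := by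
    simpa using hs0.const_mul (|x| ^ 3)
  have := squeeze_zero_norm' (hb.mono fun n hn => by rwa [Real.norm_eq_abs]) h0
  have h9 := this.add_const (x ^ 2 / 2)
  rw [zero_add] at h9
  exact h9.congr fun n => sub_add_cancel _ _

/-- `(1 - F̂(s))/s` tends to the (possibly infinite) mean as `s ↓ 0`. -/
lemma LS_first_limit {F : Measure ℝ} (h : IsNNProb F) {s : ℕ → ℝ}
    (hs : Tendsto s atTop (𝓝[>] 0)) :
    Tendsto (fun n => ENNReal.ofReal ((1 - LS F (s n)) / s n)) atTop
      (𝓝 (∫⁻ x, ENNReal.ofReal x ∂F)) := by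
  have := h.prob
  have hpos : ∀ᶠ n in atTop, 0 < s n := hs.eventually self_mem_nhdsWithin
  have key : Tendsto (fun n => ∫⁻ x, ENNReal.ofReal ((1 - Real.exp (-(s n * x))) / s n) ∂F) atTop
      (𝓝 (∫⁻ x, ENNReal.ofReal x ∂F)) := by
    refine lintegral_tendsto_of_le (fun n => by fun_prop) ?_ ?_
    · filter_upwards [hpos] with n hn
      refine ae_of_all _ fun x => ENNReal.ofReal_le_ofReal ?_
      rw [div_le_iff₀ hn]
      have := Real.add_one_le_exp (-(s n * x)); linarith
    · exact ae_of_all _ fun x => (ENNReal.continuous_ofReal.tendsto _).comp (exp_first_limit hs)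
  refine key.congr' ?_
  filter_upwards [hpos] with n hn
  have hInt : Integrable (fun x => (1 - Real.exp (-(s n * x))) / s n) F :=
    ((integrable_const _).sub (exp_integrable h.supp hn.le)).div_const _
  rw [← ofReal_integral_eq_lintegral_ofReal hInt]
  · rw [integral_div, integral_sub (integrable_const _) (exp_integrable h.supp hn.le)]
    simp [LS]
  · filter_upwards [IsNNProb.ae_nonneg h.supp] with x hx
    refine div_nonneg (sub_nonneg.2 ?_) hn.le
    rw [Real.exp_le_one_iff]; nlinarith [mul_nonneg hn.le hx]

/-- `(F̂(s) - 1 + μ s)/s²` tends to half the (possibly infinite) second moment as `s ↓ 0`. -/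
lemma LS_second_limit {F : Measure ℝ} (h : IsNNProb F) (hi : Integrable (fun x => x) F)
    {s : ℕ → ℝ} (hs : Tendsto s atTop (𝓝[>] 0)) :
    Tendsto (fun n => ENNReal.ofReal ((LS F (s n) - 1 + (∫ x, x ∂F) * s n) / s n ^ 2)) atTop
      (𝓝 ((∫⁻ x, ENNReal.ofReal (x ^ 2) ∂F) / 2)) := by
  have := h.prob
  have hpos : ∀ᶠ n in atTop, 0 < s n := hs.eventually self_mem_nhdsWithin
  have key : Tendsto (fun n => ∫⁻ x, ENNReal.ofReal
      ((Real.exp (-(s n * x)) - 1 + s n * x) / s n ^ 2) ∂F) atTop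
      (𝓝 (∫⁻ x, ENNReal.ofReal (x ^ 2 / 2) ∂F)) := by
    refine lintegral_tendsto_of_le (fun n => by fun_prop) ?_ ?_
    · filter_upwards [hpos] with n hn
      filter_upwards [IsNNProb.ae_nonneg h.supp] with x hx
      refine ENNReal.ofReal_le_ofReal ?_
      rw [div_le_iff₀ (by positivity)]
      have := exp_defect_le (mul_nonneg hn.le hx)
      nlinarith
    · exact ae_of_all _ fun x => (ENNReal.continuous_ofReal.tendsto _).comp (exp_second_limit hs)
  have e : (∫⁻ x, ENNReal.ofReal (x ^ 2 / 2) ∂F) = (∫⁻ x, ENNReal.ofReal (x ^ 2) ∂F) / 2 := by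
    simp_rw [ENNReal.ofReal_div_of_pos (show (0:ℝ) < 2 by norm_num), div_eq_mul_inv]
    rw [lintegral_mul_const _ (by fun_prop)]
    simp
  rw [← e]
  refine key.congr' ?_
  filter_upwards [hpos] with n hn
  have hInt : Integrable (fun x => (Real.exp (-(s n * x)) - 1 + s n * x) / s n ^ 2) F :=
    (((exp_integrable h.supp hn.le).sub (integrable_const _)).add (hi.const_mul _)).div_const _
  rw [← ofReal_integral_eq_lintegral_ofReal hInt, integral_div, LS_defect_eq h hi hn.le]
  exact ae_of_all _ fun x => div_nonneg (exp_defect_nonneg _) (by positivity)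

lemma tendsto_one_div_succ : Tendsto (fun n : ℕ => 1 / ((n : ℝ) + 1)) atTop (𝓝[>] 0) := by
  refine tendsto_nhdsWithin_iff.2 ⟨tendsto_one_div_add_atTop_nhds_zero_nat, ?_⟩
  exact Eventually.of_forall fun n => by simp only [mem_Ioi]; positivity

/-- A probability measure on `[0,∞)` with mean `μ` and finite second moment. -/
structure HasMoments (μ : ℝ) (F : Measure ℝ) : Prop where
  nn : IsNNProb F
  int1 : Integrable (fun x => x) F
  mean : ∫ x, x ∂F = μ
  int2 : Integrable (fun x => x ^ 2) F

/-- A second-order bound on the transform forces mean `μ` and a finite second moment. -/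
lemma HasMoments.of_bound {F : Measure ℝ} (h : IsNNProb F) {μ C : ℝ} (hμ : 0 ≤ μ)
    (hb : ∀ s, 0 ≤ s → |LS F s - 1 + μ * s| ≤ C * s ^ 2) : HasMoments μ F := by
  have hs := tendsto_one_div_succ
  set s : ℕ → ℝ := fun n : ℕ => 1 / ((n : ℝ) + 1)
  have hpos : ∀ n, 0 < s n := fun n => by simp only [s]; positivity
  have hs0 : Tendsto s atTop (𝓝 0) := hs.mono_right nhdsWithin_le_nhds
  have l1 := LS_first_limit h hs
  have l2 : Tendsto (fun n => (1 - LS F (s n)) / s n) atTop (𝓝 μ) := by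
    rw [← sub_zero μ, tendsto_iff_norm_sub_tendsto_zero]
    refine squeeze_zero (fun n => norm_nonneg _) (fun n => ?_) (by simpa using hs0.const_mul C)
    have := hb (s n) (hpos n).le
    have e : (1 - LS F (s n)) / s n - (μ - 0) = -(LS F (s n) - 1 + μ * s n) / s n := by
      field_simp [(hpos n).ne']; ring
    rw [e, Real.norm_eq_abs, abs_div, abs_neg, abs_of_pos (hpos n), div_le_iff₀ (hpos n)]
    nlinarith
  have e1 := tendsto_nhds_unique l1 ((ENNReal.continuous_ofReal.tendsto _).comp l2)
  have hae := IsNNProb.ae_nonneg h.supp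
  have int1 : Integrable (fun x => x) F :=
    (lintegral_ofReal_ne_top_iff_integrable (by fun_prop) hae).1 (by simp [e1])
  have mean : ∫ x, x ∂F = μ := by
    rw [integral_eq_lintegral_of_nonneg_ae hae (by fun_prop), e1, ENNReal.toReal_ofReal hμ]
  refine ⟨h, int1, mean, ?_⟩
  have l3 := LS_second_limit h int1 hs
  have e2 : (∫⁻ x, ENNReal.ofReal (x ^ 2) ∂F) / 2 ≤ ENNReal.ofReal C := by
    refine le_of_tendsto l3 (Eventually.of_forall fun n => ENNReal.ofReal_le_ofReal ?_)
    rw [div_le_iff₀ (by have := hpos n; positivity), mean]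
    exact (le_abs_self _).trans (hb _ (hpos n).le)
  refine (lintegral_ofReal_ne_top_iff_integrable (by fun_prop)
    (ae_of_all _ fun x => sq_nonneg x)).1 fun ht => ?_
  rw [ht, ENNReal.top_div_of_ne_top (by simp)] at e2
  simp at e2

/-! ### The transform `σ`: bounds, contraction, expansions -/

/-- The integrand of `sigmaT`. -/
noncomputable def sigInt (F : Measure ℝ) (μ s t : ℝ) : ℝ :=
  if t = 0 then μ * s else (1 - LS F (t * s)) / t

lemma sigmaT_eq (F FT : Measure ℝ) (μ s : ℝ) : sigmaT F FT μ s = ∫ t, sigInt F μ s t ∂FT := rfl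

lemma sigInt_measurable (F : Measure ℝ) [IsFiniteMeasure F] (μ s : ℝ) :
    Measurable (sigInt F μ s) := by
  have := LS_measurable F
  exact Measurable.ite (measurableSet_singleton 0) measurable_const
    ((measurable_const.sub (this.comp (by fun_prop))).div measurable_id)

namespace HasMoments

variable {F FT : Measure ℝ} {μ s t : ℝ}

lemma sigInt_nonneg (h : HasMoments μ F) (hμ : 0 ≤ μ) (hs : 0 ≤ s) (ht : 0 ≤ t) :
    0 ≤ sigInt F μ s t := by
  unfold sigInt
  split_ifs
  · positivity
  · exact div_nonneg (sub_nonneg.2 (LS_le_one h.nn (by positivity))) ht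

lemma sigInt_le (h : HasMoments μ F) (hs : 0 ≤ s) (ht : 0 ≤ t) : sigInt F μ s t ≤ μ * s := by
  unfold sigInt
  split_ifs with h0
  · rfl
  · have htp : 0 < t := lt_of_le_of_ne ht (Ne.symm h0)
    rw [div_le_iff₀ htp]
    have := one_sub_LS_le h.nn h.int1 (s := t * s) (by positivity)
    rw [h.mean] at this
    linarith

lemma sigInt_defect_le (h : HasMoments μ F) (hs : 0 ≤ s) (ht : 0 ≤ t) :
    μ * s - sigInt F μ s t ≤ t * ((∫ x, x ^ 2 ∂F) / 2) * s ^ 2 := by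
  unfold sigInt
  split_ifs with h0
  · simp [h0]
  · have htp : 0 < t := lt_of_le_of_ne ht (Ne.symm h0)
    have := LS_defect_le h.nn h.int1 h.int2 (s := t * s) (by positivity)
    rw [h.mean] at this
    have e : μ * s - (1 - LS F (t * s)) / t = (LS F (t * s) - 1 + μ * (t * s)) / t := by
      field_simp; ring
    rw [e, div_le_iff₀ htp]
    nlinarith

lemma sigInt_integrable (h : HasMoments μ F) (hμ : 0 ≤ μ) (hT : IsNNProb FT) (hs : 0 ≤ s) :
    Integrable (sigInt F μ s) FT := by
  have := hT.prob
  have := h.nn.prob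
  refine Integrable.of_bound (C := μ * s) (sigInt_measurable F μ s).aestronglyMeasurable ?_
  filter_upwards [IsNNProb.ae_nonneg hT.supp] with t ht
  rw [Real.norm_eq_abs, abs_of_nonneg (h.sigInt_nonneg hμ hs ht)]
  exact h.sigInt_le hs ht

lemma sigmaT_nonneg (h : HasMoments μ F) (hμ : 0 ≤ μ) (hT : IsNNProb FT) (hs : 0 ≤ s) :
    0 ≤ sigmaT F FT μ s := by
  rw [sigmaT_eq]
  exact integral_nonneg_of_ae ((IsNNProb.ae_nonneg hT.supp).mono fun t ht =>
    h.sigInt_nonneg hμ hs ht)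

lemma sigmaT_le (h : HasMoments μ F) (hμ : 0 ≤ μ) (hT : IsNNProb FT) (hs : 0 ≤ s) :
    sigmaT F FT μ s ≤ μ * s := by
  have := hT.prob
  rw [sigmaT_eq]
  have : ∫ _, μ * s ∂FT = μ * s := by simp
  rw [← this]
  exact integral_mono_ae (h.sigInt_integrable hμ hT hs) (integrable_const _)
    ((IsNNProb.ae_nonneg hT.supp).mono fun t ht => h.sigInt_le hs ht)

lemma sigmaT_defect_le (h : HasMoments μ F) (hμ : 0 ≤ μ) (hT : IsNNProb FT)
    (hTi : Integrable (fun t => t) FT) (hs : 0 ≤ s) :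
    μ * s - sigmaT F FT μ s ≤ (∫ t, t ∂FT) * ((∫ x, x ^ 2 ∂F) / 2) * s ^ 2 := by
  have := hT.prob
  have e : μ * s - sigmaT F FT μ s = ∫ t, (μ * s - sigInt F μ s t) ∂FT := by
    rw [integral_sub (integrable_const _) (h.sigInt_integrable hμ hT hs), sigmaT_eq]; simp
  rw [e, ← integral_mul_const, ← integral_mul_const]
  exact integral_mono_ae ((integrable_const _).sub (h.sigInt_integrable hμ hT hs))
    ((hTi.mul_const _).mul_const _)
    ((IsNNProb.ae_nonneg hT.supp).mono fun t ht => h.sigInt_defect_le hs ht)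

/-- A quadratic bound on the difference of two transforms is multiplied by `E[T]`
when passing to `sigmaT`. -/
lemma sigmaT_contract {G : Measure ℝ} (h : HasMoments μ F) (hG : HasMoments μ G) (hμ : 0 ≤ μ)
    (hT : IsNNProb FT) (hTi : Integrable (fun t => t) FT) {D : ℝ}
    (hD : ∀ s, 0 ≤ s → |LS F s - LS G s| ≤ D * s ^ 2) (hs : 0 ≤ s) :
    |sigmaT F FT μ s - sigmaT G FT μ s| ≤ (∫ t, t ∂FT) * D * s ^ 2 := by
  have := hT.prob
  rw [sigmaT_eq, sigmaT_eq, ← integral_sub (h.sigInt_integrable hμ hT hs)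
    (hG.sigInt_integrable hμ hT hs), ← integral_mul_const, ← integral_mul_const]
  refine (abs_integral_le_integral_abs).trans (integral_mono_ae
    ((h.sigInt_integrable hμ hT hs).sub (hG.sigInt_integrable hμ hT hs)).abs
    ((hTi.mul_const _).mul_const _) ?_)
  filter_upwards [IsNNProb.ae_nonneg hT.supp] with t ht
  unfold sigInt
  split_ifs with h0
  · simp [h0]
  · have htp : 0 < t := lt_of_le_of_ne ht (Ne.symm h0)
    have e : (1 - LS F (t * s)) / t - (1 - LS G (t * s)) / t
      = -(LS F (t * s) - LS G (t * s)) / t := by ring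
    rw [e, abs_div, abs_neg, abs_of_pos htp, div_le_iff₀ htp]
    have := hD (t * s) (by positivity)
    nlinarith

/-- `(μ s - σ(s))/s²` tends to `E[T] E[X²]/2` in `[0,∞]` as `s ↓ 0`. -/
lemma sigmaT_second_limit (h : HasMoments μ F) (hμ : 0 ≤ μ) (hT : IsNNProb FT) {s : ℕ → ℝ}
    (hs : Tendsto s atTop (𝓝[>] 0)) :
    Tendsto (fun n => ENNReal.ofReal ((μ * s n - sigmaT F FT μ (s n)) / s n ^ 2)) atTop
      (𝓝 ((∫⁻ t, ENNReal.ofReal t ∂FT) * ((∫⁻ x, ENNReal.ofReal (x ^ 2) ∂F) / 2))) := by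
  have := hT.prob
  have := h.nn.prob
  have hpos : ∀ᶠ n in atTop, 0 < s n := hs.eventually self_mem_nhdsWithin
  have e2 : (∫⁻ x, ENNReal.ofReal (x ^ 2) ∂F) / 2 = ENNReal.ofReal ((∫ x, x ^ 2 ∂F) / 2) := by
    rw [ENNReal.ofReal_div_of_pos (by norm_num), ofReal_integral_eq_lintegral_ofReal h.int2
      (ae_of_all _ fun x => sq_nonneg x)]
    simp
  have h2n : 0 ≤ (∫ x, x ^ 2 ∂F) / 2 := div_nonneg (integral_nonneg fun x => sq_nonneg x) (by simp)
  have key : Tendsto (fun n => ∫⁻ t, ENNReal.ofReal ((μ * s n - sigInt F μ (s n) t) / s n ^ 2) ∂FT)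
      atTop (𝓝 (∫⁻ t, ENNReal.ofReal t * ENNReal.ofReal ((∫ x, x ^ 2 ∂F) / 2) ∂FT)) := by
    refine lintegral_tendsto_of_le (fun n => ?_) ?_ ?_
    · have := sigInt_measurable F μ (s n)
      fun_prop
    · filter_upwards [hpos] with n hn
      filter_upwards [IsNNProb.ae_nonneg hT.supp] with t ht
      rw [← ENNReal.ofReal_mul ht]
      refine ENNReal.ofReal_le_ofReal ?_
      rw [div_le_iff₀ (by positivity)]
      exact h.sigInt_defect_le hn.le ht
    · filter_upwards [IsNNProb.ae_nonneg hT.supp] with t ht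
      rcases ht.eq_or_lt with h0 | h0
      · simp [← h0, sigInt]
      · have ht0 : Tendsto (fun n => t * s n) atTop (𝓝[>] 0) := by
          refine tendsto_nhdsWithin_iff.2 ⟨?_, ?_⟩
          · simpa using (hs.mono_right nhdsWithin_le_nhds).const_mul t
          · filter_upwards [hpos] with n hn using mul_pos h0 hn
        have l := ENNReal.Tendsto.const_mul (a := ENNReal.ofReal t)
          (LS_second_limit h.nn h.int1 ht0) (Or.inr (by simp))
        rw [e2] at l
        refine l.congr' ?_
        filter_upwards [hpos] with n hn
        rw [← ENNReal.ofReal_mul ht, h.mean]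
        congr 1
        simp only [sigInt, h0.ne', if_false]
        field_simp
        ring
  rw [lintegral_mul_const _ (by fun_prop), ← e2] at key
  refine key.congr' ?_
  filter_upwards [hpos] with n hn
  have hInt := (((integrable_const (μ * s n)).sub (h.sigInt_integrable hμ hT hn.le)).div_const
    (s n ^ 2))
  have e : (μ * s n - sigmaT F FT μ (s n)) / s n ^ 2
      = ∫ t, ((μ * s n - sigInt F μ (s n) t) / s n ^ 2) ∂FT := by
    rw [integral_div, integral_sub (integrable_const _) (h.sigInt_integrable hμ hT hn.le),
      sigmaT_eq]; simp
  rw [e]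
  symm
  refine ofReal_integral_eq_lintegral_ofReal hInt ?_
  filter_upwards [IsNNProb.ae_nonneg hT.supp] with t ht
  exact div_nonneg (sub_nonneg.2 (h.sigInt_le hn.le ht)) (by positivity)

/-- `σ(s)/s → μ` as `s ↓ 0`, with no moment condition on `T`. -/
lemma sigmaT_first_limit (h : HasMoments μ F) (hμ : 0 ≤ μ) (hT : IsNNProb FT) {s : ℕ → ℝ}
    (hs : Tendsto s atTop (𝓝[>] 0)) :
    Tendsto (fun n => sigmaT F FT μ (s n) / s n) atTop (𝓝 μ) := by
  have := hT.prob
  have := h.nn.prob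
  have hpos : ∀ᶠ n in atTop, 0 < s n := hs.eventually self_mem_nhdsWithin
  have hs0 : Tendsto s atTop (𝓝 0) := hs.mono_right nhdsWithin_le_nhds
  have hn0 := IsNNProb.ae_nonneg hT.supp
  have e : ∫ _, μ ∂FT = μ := by simp
  conv => rhs; rw [← e]
  simp_rw [sigmaT_eq, ← integral_div]
  refine tendsto_integral_filter_of_dominated_convergence (fun _ => μ) ?_ ?_
    (integrable_const _) ?_
  · exact Eventually.of_forall fun n => ((sigInt_measurable F μ (s n)).div_const _).aestronglyMeasurable
  · filter_upwards [hpos] with n hn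
    filter_upwards [hn0] with t ht
    rw [Real.norm_eq_abs, abs_of_nonneg (div_nonneg (h.sigInt_nonneg hμ hn.le ht) hn.le),
      div_le_iff₀ hn]
    exact h.sigInt_le hn.le ht
  · filter_upwards [hn0] with t ht
    have hb : ∀ᶠ n in atTop, ‖sigInt F μ (s n) t / s n - μ‖
        ≤ t * ((∫ x, x ^ 2 ∂F) / 2) * s n := by
      filter_upwards [hpos] with n hn
      have e : sigInt F μ (s n) t / s n - μ = -((μ * s n - sigInt F μ (s n) t) / s n) := by
        field_simp; ring
      rw [e, norm_neg, Real.norm_eq_abs, abs_of_nonneg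
        (div_nonneg (sub_nonneg.2 (h.sigInt_le hn.le ht)) hn.le), div_le_iff₀ hn]
      have := h.sigInt_defect_le hn.le ht
      nlinarith
    have := squeeze_zero_norm' hb (by simpa using hs0.const_mul (t * ((∫ x, x ^ 2 ∂F) / 2)))
    have h9 := this.add_const μ
    rw [zero_add] at h9
    exact h9.congr fun n => sub_add_cancel _ _

end HasMoments

lemma IsNNProb.dirac {c : ℝ} (hc : 0 ≤ c) : IsNNProb (Measure.dirac c) :=
  ⟨inferInstance, by simp [hc]⟩

lemma HasMoments.dirac {c : ℝ} (hc : 0 ≤ c) : HasMoments c (Measure.dirac c) :=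
  ⟨IsNNProb.dirac hc, integrable_dirac (by simp), by simp, integrable_dirac (by simp)⟩

/-- `σ_B` is the transform `sigmaT` built from the point mass at `1`. -/
lemma sigmaB_eq {FB : Measure ℝ} (hB : IsNNProb FB) {s : ℝ} (hs : 0 ≤ s) :
    sigmaB FB s = sigmaT (Measure.dirac 1) FB 1 s := by
  have := hB.prob
  unfold sigmaB LS
  rw [intervalIntegral.integral_of_le hs, integral_integral_swap]
  · rw [sigmaT_eq]
    refine integral_congr_ae ?_
    filter_upwards with b
    rw [← intervalIntegral.integral_of_le hs]
    unfold sigInt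
    split_ifs with h0
    · simp [h0]
    · rw [LS_dirac]
      have hd : ∀ t ∈ uIcc 0 s, HasDerivAt (fun t => -(Real.exp (-(t * b)) / b))
          (Real.exp (-(t * b))) t := by
        intro t _
        have := (((hasDerivAt_id t).mul_const b).neg.exp.div_const b).neg
        refine HasDerivAt.congr_deriv (f := fun t => -(Real.exp (-(t * b)) / b)) this ?_
        simp only [id, Pi.neg_apply]
        field_simp
      rw [intervalIntegral.integral_eq_sub_of_hasDerivAt hd
        (Continuous.intervalIntegrable (by fun_prop) _ _)]
      simp
      field_simp
      ring
  · refine Integrable.of_bound (C := 1) (Continuous.aestronglyMeasurable (by fun_prop)) ?_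
    have h1 : ∀ᵐ p ∂((volume.restrict (Ioc 0 s)).prod FB), 0 ≤ p.1 :=
      Measure.quasiMeasurePreserving_fst.ae
        ((ae_restrict_mem measurableSet_Ioc).mono fun x hx => hx.1.le)
    have h2 : ∀ᵐ p ∂((volume.restrict (Ioc 0 s)).prod FB), 0 ≤ p.2 :=
      Measure.quasiMeasurePreserving_snd.ae (IsNNProb.ae_nonneg hB.supp)
    filter_upwards [h1, h2] with p h1 h2
    simp only [Function.uncurry]
    rw [Real.norm_eq_abs, abs_of_pos (Real.exp_pos _), Real.exp_le_one_iff]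
    nlinarith [mul_nonneg h1 h2]

lemma sigmaB_lip {FB : Measure ℝ} (hB : IsNNProb FB) {s t : ℝ} (hs : 0 ≤ s) (ht : 0 ≤ t) :
    |sigmaB FB s - sigmaB FB t| ≤ |s - t| := by
  have := hB.prob
  have hii : ∀ u, 0 ≤ u → IntervalIntegrable (LS FB) volume 0 u := by
    intro u hu
    refine intervalIntegrable_iff.2 (Measure.integrableOn_of_bounded (M := 1) (by simp)
      (LS_measurable FB).aestronglyMeasurable ?_)
    refine (ae_restrict_mem measurableSet_uIoc).mono fun x hx => ?_
    rw [uIoc_of_le hu] at hx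
    rw [Real.norm_eq_abs, abs_of_nonneg (LS_nonneg _ _)]
    exact LS_le_one hB hx.1.le
  unfold sigmaB
  rw [intervalIntegral.integral_interval_sub_left (hii s hs) (hii t ht)]
  have := intervalIntegral.norm_integral_le_of_norm_le_const (a := t) (b := s) (f := LS FB) (C := 1)
    (fun x hx => by
      have : 0 < x := (le_min ht hs).trans_lt hx.1
      rw [Real.norm_eq_abs, abs_of_nonneg (LS_nonneg _ _)]
      exact LS_le_one hB this.le)
  simpa using this

/-! ### Uniqueness and continuity theorems; mixed compound Poisson laws -/

open BoundedContinuousFunction in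
/-- A probability measure on `[0,∞)` is determined by its Laplace transform: polynomials in
`e^{-x}` separate the points of `[0,∞)`. -/
lemma IsNNProb.ext_LS {F G : Measure ℝ} (hF : IsNNProb F) (hG : IsNNProb G)
    (h : ∀ s, 0 ≤ s → LS F s = LS G s) : F = G := by
  have := hF.prob
  have := hG.prob
  -- Pass to `ℝ≥0`, where `e^{-x}` separates points.
  have hmap : ∀ H : Measure ℝ, H (Iio 0) = 0 →
      (H.map Real.toNNReal).map (fun x : ℝ≥0 => (x : ℝ)) = H := by
    intro H hH
    rw [Measure.map_map (by fun_prop) (by fun_prop)]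
    conv_rhs => rw [← Measure.map_id (μ := H)]
    refine Measure.map_congr ?_
    filter_upwards [IsNNProb.ae_nonneg hH] with x hx
    simp [hx]
  rw [← hmap F hF.supp, ← hmap G hG.supp]
  congr 1
  have i1 : IsProbabilityMeasure (F.map Real.toNNReal) :=
    Measure.isProbabilityMeasure_map (by fun_prop)
  have i2 : IsProbabilityMeasure (G.map Real.toNNReal) :=
    Measure.isProbabilityMeasure_map (by fun_prop)
  let e : ℝ≥0 →ᵇ ℝ := BoundedContinuousFunction.ofNormedAddCommGroup
    (fun x : ℝ≥0 => Real.exp (-(x : ℝ))) (by fun_prop) 1 (fun x => by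
      rw [Real.norm_eq_abs, abs_of_pos (Real.exp_pos _), Real.exp_le_one_iff]; simp)
  have hstar : ∀ g : ℝ≥0 →ᵇ ℝ, star g = g := fun g => by ext; simp
  let A : StarSubalgebra ℝ (ℝ≥0 →ᵇ ℝ) :=
    { Algebra.adjoin ℝ {e} with star_mem' := fun {g} hg => by rw [hstar]; exact hg }
  have hpow : ∀ H : Measure ℝ, IsProbabilityMeasure (H.map Real.toNNReal) → H (Iio 0) = 0 →
      ∀ k : ℕ, ∫ x, (e ^ k) x ∂(H.map Real.toNNReal) = LS H k := by
    intro H _ hH k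
    rw [integral_map (by fun_prop) ((e ^ k).continuous.aestronglyMeasurable)]
    refine integral_congr_ae ?_
    filter_upwards [IsNNProb.ae_nonneg hH] with x hx
    simp [e, hx, ← Real.exp_nat_mul]
  refine ext_of_forall_mem_subalgebra_integral_eq_of_polish (𝕜 := ℝ) (A := A) ?_ ?_
  · intro x y hxy
    refine ⟨fun z => e z, ⟨e.toContinuousMap, ⟨e, Algebra.self_mem_adjoin_singleton ℝ e, rfl⟩, rfl⟩,
      ?_⟩
    simpa [e] using hxy
  · intro g hg
    have hg' : g ∈ Algebra.adjoin ℝ {e} := hg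
    rw [Algebra.adjoin_singleton_eq_range_aeval] at hg'
    obtain ⟨p, rfl⟩ := hg'
    have hsum : ∀ (H : Measure ℝ), IsProbabilityMeasure (H.map Real.toNNReal) → H (Iio 0) = 0 →
        ∫ x, (Polynomial.aeval e p) x ∂(H.map Real.toNNReal)
          = ∑ k ∈ p.support, p.coeff k * LS H k := by
      intro H iH hH
      have : ∀ x, (Polynomial.aeval e p) x = ∑ k ∈ p.support, p.coeff k * (e ^ k) x := by
        intro x
        rw [Polynomial.aeval_def, Polynomial.eval₂_eq_sum, Polynomial.sum]
        simp only [BoundedContinuousFunction.coe_sum, Finset.sum_apply]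
        refine Finset.sum_congr rfl fun k _ => ?_
        rw [← Algebra.smul_def]
        rfl
      simp_rw [this]
      rw [integral_finsetSum _ fun k _ => ((e ^ k).integrable _).const_mul _]
      simp_rw [integral_const_mul, hpow H iH hH]
    change ∫ x, (Polynomial.aeval e p) x ∂(F.map Real.toNNReal)
      = ∫ x, (Polynomial.aeval e p) x ∂(G.map Real.toNNReal)
    rw [hsum F i1 hF.supp, hsum G i2 hG.supp]
    exact Finset.sum_congr rfl fun k _ => by rw [h k (by positivity)]

/-- Tail bound by the Laplace transform near `0`. -/
lemma IsNNProb.tail_le {F : Measure ℝ} (h : IsNNProb F) {s : ℝ} (hs : 0 < s) :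
    F (Metric.closedBall 0 (1 / s))ᶜ ≤ ENNReal.ofReal (2 * (1 - LS F s)) := by
  have := h.prob
  have hInt : Integrable (fun x => 2 * (1 - Real.exp (-(s * x)))) F :=
    ((integrable_const _).sub (exp_integrable h.supp hs.le)).const_mul 2
  have e : 2 * (1 - LS F s) = ∫ x, 2 * (1 - Real.exp (-(s * x))) ∂F := by
    rw [integral_const_mul, integral_sub (integrable_const _) (exp_integrable h.supp hs.le)]
    simp [LS]
  have hnn := IsNNProb.ae_nonneg h.supp
  rw [e, ofReal_integral_eq_lintegral_ofReal hInt, ← setLIntegral_one]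
  · rw [← lintegral_indicator Metric.isClosed_closedBall.measurableSet.compl]
    refine lintegral_mono_ae ?_
    filter_upwards [hnn] with x hx
    by_cases hxs : x ∈ (Metric.closedBall (0:ℝ) (1 / s))ᶜ
    · rw [indicator_of_mem hxs, ← ENNReal.ofReal_one]
      refine ENNReal.ofReal_le_ofReal ?_
      have hx1 : 1 < s * x := by
        simp only [mem_compl_iff, Metric.mem_closedBall, dist_zero_right, Real.norm_eq_abs,
          abs_of_nonneg hx, not_le] at hxs
        rwa [div_lt_iff₀ hs, mul_comm] at hxs
      have h2 : Real.exp (-(s * x)) ≤ Real.exp (-1) := Real.exp_le_exp.2 (by linarith)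
      have h3 : Real.exp (-1) ≤ 1 / 2 := by
        rw [Real.exp_neg, inv_eq_one_div]
        exact one_div_le_one_div_of_le (by norm_num) (by have := Real.add_one_le_exp 1; linarith)
      linarith
    · rw [indicator_of_notMem hxs]; exact zero_le
  · filter_upwards [hnn] with x hx
    have : Real.exp (-(s * x)) ≤ 1 := by
      rw [Real.exp_le_one_iff]; nlinarith [mul_nonneg hs.le hx]
    simp only [Pi.zero_apply]; linarith

/-- Continuity theorem: a pointwise limit of Laplace transforms that tend to `1` at `0`
uniformly is again a Laplace transform. -/
lemma exists_of_tendsto_LS {ν : ℕ → Measure ℝ} (hν : ∀ n, IsNNProb (ν n)) {g k : ℝ → ℝ}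
    (hk : Tendsto k (𝓝[>] 0) (𝓝 0)) (hb : ∀ n s, 0 < s → 1 - LS (ν n) s ≤ k s)
    (hg : ∀ s, 0 ≤ s → Tendsto (fun n => LS (ν n) s) atTop (𝓝 (g s))) :
    ∃ G, IsNNProb G ∧ ∀ s, 0 ≤ s → LS G s = g s := by
  let P : ℕ → ProbabilityMeasure ℝ := fun n => ⟨ν n, (hν n).prob⟩
  have htight : IsTightMeasureSet {((μ : ProbabilityMeasure ℝ) : Measure ℝ) | μ ∈ range P} := by
    rw [isTightMeasureSet_iff_exists_isCompact_measure_compl_le]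
    intro ε hε
    have hk2 : Tendsto (fun s => ENNReal.ofReal (2 * k s)) (𝓝[>] 0) (𝓝 0) := by
      have := (ENNReal.continuous_ofReal.tendsto _).comp (hk.const_mul 2)
      rw [mul_zero, ENNReal.ofReal_zero] at this
      exact this
    obtain ⟨s, hs1, hs2⟩ := ((hk2.eventually (Iic_mem_nhds hε)).and self_mem_nhdsWithin).exists
    refine ⟨Metric.closedBall 0 (1 / s), isCompact_closedBall _ _, ?_⟩
    rintro _ ⟨_, ⟨n, rfl⟩, rfl⟩
    refine ((hν n).tail_le hs2).trans (le_trans (ENNReal.ofReal_le_ofReal ?_) hs1)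
    have := hb n s hs2
    linarith
  -- Tightness gives a limit along a free ultrafilter, so no subsequence has to be extracted.
  have hcomp := isCompact_closure_of_isTightMeasureSet htight
  obtain ⟨G, -, hG⟩ := hcomp.ultrafilter_le_nhds ((hyperfilter ℕ).map P) (by
    refine le_trans ?_ (monotone_principal subset_closure)
    simp)
  have hG' : Tendsto P (hyperfilter ℕ) (𝓝 G) := hG
  have hU : (hyperfilter ℕ : Filter ℕ) ≤ atTop := by
    rw [← Nat.cofinite_eq_atTop]; exact hyperfilter_le_cofinite
  have hsupp : (G : Measure ℝ) (Iio 0) = 0 := by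
    have := ProbabilityMeasure.le_liminf_measure_open_of_tendsto hG' (isOpen_Iio (a := (0:ℝ)))
    have h0 : ∀ n, (P n : Measure ℝ) (Iio 0) = 0 := fun n => (hν n).supp
    simp only [h0] at this
    simpa using this
  refine ⟨G, ⟨inferInstance, hsupp⟩, fun s hs => ?_⟩
  -- Bounded continuous on `ℝ` and equal to `e^{-s x}` on `[0,∞)`.
  let f : BoundedContinuousFunction ℝ ℝ := BoundedContinuousFunction.ofNormedAddCommGroup
    (fun x : ℝ => Real.exp (-(s * max x 0))) (by fun_prop) 1 (fun x => by
      rw [Real.norm_eq_abs, abs_of_pos (Real.exp_pos _), Real.exp_le_one_iff]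
      have := mul_nonneg hs (le_max_right x 0)
      linarith)
  have hf : ∀ H : Measure ℝ, H (Iio 0) = 0 → ∫ x, f x ∂H = LS H s := by
    intro H hH
    refine integral_congr_ae ?_
    filter_upwards [IsNNProb.ae_nonneg hH] with x hx
    simp [f, hx]
  have l1 := (ProbabilityMeasure.tendsto_iff_forall_integral_tendsto.1 hG') f
  rw [hf _ hsupp] at l1
  refine tendsto_nhds_unique l1 (((hg s hs).mono_left hU).congr fun n => ?_)
  exact (hf _ (hν n).supp).symm

/-- The Laplace transform with values in `[0,∞]`, for which no integrability is needed. -/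
noncomputable def lapENN (F : Measure ℝ) (s : ℝ) : ℝ≥0∞ :=
  ∫⁻ x, ENNReal.ofReal (Real.exp (-(s * x))) ∂F

lemma lapENN_eq {F : Measure ℝ} [IsFiniteMeasure F] (h : F (Iio 0) = 0) {s : ℝ} (hs : 0 ≤ s) :
    lapENN F s = ENNReal.ofReal (LS F s) :=
  (ofReal_integral_eq_lintegral_ofReal (exp_integrable h hs)
    (ae_of_all _ fun _ => (Real.exp_pos _).le)).symm

/-- Iterated convolution powers. -/
noncomputable def convPow (ν : Measure ℝ) : ℕ → Measure ℝ
  | 0 => Measure.dirac 0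
  | k + 1 => (convPow ν k).conv ν

lemma convPow_prop {ν : Measure ℝ} [IsFiniteMeasure ν] (h : ν (Iio 0) = 0) (k : ℕ) :
    IsFiniteMeasure (convPow ν k) ∧ convPow ν k (Iio 0) = 0 ∧ ∀ s, lapENN (convPow ν k) s = lapENN ν s ^ k := by
  induction k with
  | zero =>
    refine ⟨by unfold convPow; infer_instance, by simp [convPow], fun s => by simp [convPow, lapENN]⟩
  | succ k ih =>
    obtain ⟨i1, i2, i3⟩ := ih
    refine ⟨by unfold convPow; infer_instance, ?_, fun s => ?_⟩
    · have hae : ∀ᵐ x ∂(convPow ν (k + 1)), 0 ≤ x := by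
        unfold convPow Measure.conv
        rw [ae_map_iff (by fun_prop) measurableSet_Ici]
        filter_upwards [Measure.quasiMeasurePreserving_fst.ae (IsNNProb.ae_nonneg i2),
          Measure.quasiMeasurePreserving_snd.ae (IsNNProb.ae_nonneg h)] with p h1 h2
        exact add_nonneg h1 h2
      rw [ae_iff] at hae; simpa [Set.Iio] using hae
    · unfold lapENN convPow
      rw [Measure.conv, lintegral_map (by fun_prop) (by fun_prop)]
      have : ∀ p : ℝ × ℝ, ENNReal.ofReal (Real.exp (-(s * (p.1 + p.2))))
          = ENNReal.ofReal (Real.exp (-(s * p.1))) * ENNReal.ofReal (Real.exp (-(s * p.2))) := by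
        intro p
        rw [← ENNReal.ofReal_mul (Real.exp_pos _).le, ← Real.exp_add]
        congr 2; ring
      simp_rw [this]
      rw [lintegral_prod_mul (f := fun x => ENNReal.ofReal (Real.exp (-(s * x))))
        (g := fun x => ENNReal.ofReal (Real.exp (-(s * x)))) (by fun_prop) (by fun_prop), pow_succ]
      congr 1
      exact i3 s

/-- Mixed compound Poisson laws: if `ρ` is a law on `[0,∞)` and `ν` a finite measure on `[0,∞)`,
then `s ↦ ρ̂(ν̂(0) - ν̂(s))` is a Laplace transform, namely that of the mixture of the convolution
powers of `ν` obtained by expanding `e^{z ν̂(s)}` in powers of `z ν̂(s)`. -/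
lemma exists_compound {ρ ν : Measure ℝ} [IsFiniteMeasure ν] (hρ : IsNNProb ρ) (hν : ν (Iio 0) = 0) :
    ∃ G, IsNNProb G ∧ ∀ s, 0 ≤ s → LS G s = LS ρ (LS ν 0 - LS ν s) := by
  have := hρ.prob
  set c := LS ν 0
  -- Conditionally on `Z = z` with law `ρ`, the number of jumps is Poisson of mean `c z`; the powers
  -- of `c` are absorbed in the unnormalized convolution powers.
  let w : ℕ → ℝ≥0∞ := fun k => ∫⁻ z, ENNReal.ofReal (Real.exp (-(c * z)) * (z ^ k / k.factorial)) ∂ρ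
  let G : Measure ℝ := Measure.sum fun k => w k • convPow ν k
  have h_lap : ∀ s, 0 ≤ s → lapENN G s = ∫⁻ z, ENNReal.ofReal (Real.exp (-((c - LS ν s) * z))) ∂ρ := by
    intro s hs
    unfold lapENN
    rw [lintegral_sum_measure]
    simp_rw [lintegral_smul_measure]
    have : ∀ k, w k • ∫⁻ x, ENNReal.ofReal (Real.exp (-(s * x))) ∂(convPow ν k)
        = ∫⁻ z, ENNReal.ofReal (Real.exp (-(c * z)) * (z ^ k / k.factorial))
          * ENNReal.ofReal (LS ν s ^ k) ∂ρ := by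
      intro k
      rw [lintegral_mul_const _ (by fun_prop), smul_eq_mul]
      congr 1
      have := (convPow_prop hν k).2.2 s
      rw [lapENN_eq hν hs, ← ENNReal.ofReal_pow (LS_nonneg _ _)] at this
      exact this
    simp_rw [this]
    rw [← lintegral_tsum (fun k => by fun_prop)]
    refine lintegral_congr_ae ?_
    filter_upwards [IsNNProb.ae_nonneg hρ.supp] with z hz
    have hh : HasSum (fun k : ℕ => Real.exp (-(c * z)) * (z ^ k / k.factorial) * LS ν s ^ k)
        (Real.exp (-((c - LS ν s) * z))) := by
      have h1 := (NormedSpace.expSeries_div_hasSum_exp (z * LS ν s)).mul_left (Real.exp (-(c * z)))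
      rw [← Real.exp_eq_exp_ℝ, ← Real.exp_add] at h1
      have e1 : (fun k : ℕ => Real.exp (-(c * z)) * (z ^ k / k.factorial) * LS ν s ^ k)
          = fun k : ℕ => Real.exp (-(c * z)) * ((z * LS ν s) ^ k / k.factorial) := by
        funext k; rw [mul_pow]; ring
      have e2 : -((c - LS ν s) * z) = -(c * z) + z * LS ν s := by ring
      rw [e1, e2]
      exact h1
    have h2 : ∀ k : ℕ, 0 ≤ Real.exp (-(c * z)) * (z ^ k / k.factorial) * LS ν s ^ k := fun k => by
      have := LS_nonneg ν s
      positivity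
    rw [← hh.tsum_eq, ENNReal.ofReal_tsum_of_nonneg h2 hh.summable]
    refine tsum_congr fun k => ?_
    exact (ENNReal.ofReal_mul (by positivity)).symm
  have hG1 : IsProbabilityMeasure G := by
    refine ⟨?_⟩
    have := h_lap 0 le_rfl
    simpa [lapENN, c] using this
  have hG0 : G (Iio 0) = 0 := by
    simp only [G]
    rw [Measure.sum_apply _ measurableSet_Iio]
    simp [(convPow_prop hν _).2.1]
  refine ⟨G, ⟨hG1, hG0⟩, fun s hs => ?_⟩
  have h1 := h_lap s hs
  have hcs : 0 ≤ c - LS ν s := by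
    simp only [c]
    refine sub_nonneg.2 (integral_mono_ae (exp_integrable hν hs) (exp_integrable hν le_rfl) ?_)
    filter_upwards [IsNNProb.ae_nonneg hν] with x hx
    exact Real.exp_le_exp.2 (by nlinarith [mul_nonneg hs hx])
  have h2 := lapENN_eq hρ.supp hcs
  unfold lapENN at h2
  rw [h2, lapENN_eq hG0 hs] at h1
  exact (ENNReal.ofReal_eq_ofReal_iff (LS_nonneg _ _) (LS_nonneg _ _)).1 h1

/-! ### Subordination: `ρ̂ ∘ σ` is a Laplace transform -/

/-- Truncated Lévy measure: the law of `max T ε * X` weighted by `1 / max T ε`. -/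
noncomputable def levyTrunc (F FT : Measure ℝ) (ε : ℝ) : Measure ℝ :=
  ((FT.withDensity fun t => ENNReal.ofReal (1 / max t ε)).prod F).map fun p => max p.1 ε * p.2

lemma levyTrunc_finite {FT : Measure ℝ} (hT : IsNNProb FT) {ε : ℝ} (hε : 0 < ε) :
    IsFiniteMeasure (FT.withDensity fun t => ENNReal.ofReal (1 / max t ε)) := by
  have := hT.prob
  refine isFiniteMeasure_withDensity ?_
  refine ne_top_of_le_ne_top (b := ∫⁻ _, ENNReal.ofReal (1 / ε) ∂FT) (by simp) ?_
  refine lintegral_mono fun t => ENNReal.ofReal_le_ofReal ?_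
  exact one_div_le_one_div_of_le hε (le_max_right _ _)

/-- The exponent of the truncated measure is `σ` with `T` replaced by `max T ε`. -/
lemma levyTrunc_prop {F FT : Measure ℝ} {μ : ℝ} (h : HasMoments μ F) (hT : IsNNProb FT)
    {ε : ℝ} (hε : 0 < ε) :
    IsFiniteMeasure (levyTrunc F FT ε) ∧ levyTrunc F FT ε (Iio 0) = 0 ∧
    ∀ s, 0 ≤ s → LS (levyTrunc F FT ε) 0 - LS (levyTrunc F FT ε) s
      = ∫ t, sigInt F μ s (max t ε) ∂FT := by
  have := hT.prob
  have := h.nn.prob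
  have := levyTrunc_finite hT hε
  have hmp : ∀ t : ℝ, 0 < max t ε := fun t => lt_max_of_lt_right hε
  have hfin : IsFiniteMeasure (levyTrunc F FT ε) := by unfold levyTrunc; infer_instance
  have hae : ∀ᵐ x ∂(levyTrunc F FT ε), 0 ≤ x := by
    unfold levyTrunc
    rw [ae_map_iff (by fun_prop) measurableSet_Ici]
    filter_upwards [Measure.quasiMeasurePreserving_snd.ae (IsNNProb.ae_nonneg h.nn.supp)]
      with p h2
    exact mul_nonneg (hmp _).le h2
  have h0 : levyTrunc F FT ε (Iio 0) = 0 := by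
    rw [ae_iff] at hae; simpa [Set.Iio] using hae
  have hLm := LS_measurable F
  have hval : ∀ s, 0 ≤ s → LS (levyTrunc F FT ε) s
      = ∫ t, (1 / max t ε) * LS F (max t ε * s) ∂FT := by
    intro s hs
    have hi := exp_integrable h0 hs
    unfold levyTrunc at hi
    rw [integrable_map_measure (by fun_prop) (by fun_prop)] at hi
    simp only [Function.comp_def] at hi
    unfold LS levyTrunc
    rw [integral_map (by fun_prop) (by fun_prop), integral_prod _ hi,
      integral_withDensity_eq_integral_toReal_smul (by fun_prop) (by simp)]
    refine integral_congr_ae (ae_of_all _ fun t => ?_)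
    simp only [smul_eq_mul]
    rw [ENNReal.toReal_ofReal (one_div_nonneg.2 (hmp t).le)]
    congr 1
    refine integral_congr_ae (ae_of_all _ fun x => ?_)
    simp only
    congr 1
    ring
  refine ⟨hfin, h0, fun s hs => ?_⟩
  have hInt : ∀ s, 0 ≤ s → Integrable (fun t => (1 / max t ε) * LS F (max t ε * s)) FT := by
    intro s hs
    refine Integrable.of_bound (C := 1 / ε) (Measurable.aestronglyMeasurable (by fun_prop)) ?_
    refine ae_of_all _ fun t => ?_
    have h1 := LS_nonneg F (max t ε * s)
    have h2 := LS_le_one h.nn (mul_nonneg (hmp t).le hs)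
    have h3 : 0 ≤ 1 / max t ε := one_div_nonneg.2 (hmp t).le
    have h4 : 1 / max t ε ≤ 1 / ε := one_div_le_one_div_of_le hε (le_max_right _ _)
    rw [Real.norm_eq_abs, abs_of_nonneg (mul_nonneg h3 h1)]
    nlinarith
  rw [hval 0 le_rfl, hval s hs, ← integral_sub (hInt 0 le_rfl) (hInt s hs)]
  refine integral_congr_ae (ae_of_all _ fun t => ?_)
  simp only [sigInt, (hmp t).ne', if_false, mul_zero, LS_zero h.nn.prob]
  ring

/-- The truncated exponents converge to `σ(s)` as the truncation level tends to `0`. -/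
lemma levyTrunc_limit {F FT : Measure ℝ} {μ : ℝ} (h : HasMoments μ F) (hμ : 0 ≤ μ)
    (hT : IsNNProb FT) {s : ℝ} (hs : 0 ≤ s) :
    Tendsto (fun n : ℕ => ∫ t, sigInt F μ s (max t (1 / ((n : ℝ) + 1))) ∂FT) atTop
      (𝓝 (sigmaT F FT μ s)) := by
  have := hT.prob
  have := h.nn.prob
  have hp : ∀ n : ℕ, 0 < 1 / ((n : ℝ) + 1) := fun n => by positivity
  have hm := sigInt_measurable F μ s
  rw [sigmaT_eq]
  refine tendsto_integral_of_dominated_convergence (fun _ => μ * s)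
    (fun n => (hm.comp (by fun_prop)).aestronglyMeasurable) (integrable_const _)
    (fun n => ae_of_all _ fun t => ?_) ?_
  · have ht : 0 ≤ max t (1 / ((n : ℝ) + 1)) := le_max_of_le_right (hp n).le
    rw [Real.norm_eq_abs, abs_of_nonneg (h.sigInt_nonneg hμ hs ht)]
    exact h.sigInt_le hs ht
  · filter_upwards [IsNNProb.ae_nonneg hT.supp] with t ht
    rcases ht.eq_or_lt with rfl | htp
    · have e : ∀ n : ℕ, max 0 (1 / ((n : ℝ) + 1)) = 1 / ((n : ℝ) + 1) := fun n =>
        max_eq_right (hp n).le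
      simp_rw [e]
      -- squeeze between `μ s - C ε` and `μ s`
      have hl : Tendsto (fun n : ℕ => μ * s - 1 / ((n : ℝ) + 1) * ((∫ x, x ^ 2 ∂F) / 2) * s ^ 2)
          atTop (𝓝 (μ * s)) := by
        have h0 : Tendsto (fun n : ℕ => 1 / ((n : ℝ) + 1)) atTop (𝓝 0) :=
          tendsto_one_div_add_atTop_nhds_zero_nat
        have := ((h0.mul_const ((∫ x, x ^ 2 ∂F) / 2)).mul_const (s ^ 2)).const_sub (μ * s)
        simpa using this
      have e0 : sigInt F μ s 0 = μ * s := by simp [sigInt]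
      rw [e0]
      refine tendsto_of_tendsto_of_tendsto_of_le_of_le hl tendsto_const_nhds (fun n => ?_)
        (fun n => h.sigInt_le hs (hp n).le)
      have := h.sigInt_defect_le hs (hp n).le
      simp only
      linarith
    · have h0 : Tendsto (fun n : ℕ => 1 / ((n : ℝ) + 1)) atTop (𝓝 0) :=
        tendsto_one_div_add_atTop_nhds_zero_nat
      refine tendsto_const_nhds.congr' ?_
      filter_upwards [h0.eventually (Iio_mem_nhds htp)] with n hn
      rw [max_eq_left (le_of_lt hn)]

lemma LS_continuousOn {F : Measure ℝ} (h : IsNNProb F) : ContinuousOn (LS F) (Ici 0) := by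
  have := h.prob
  refine continuousOn_of_dominated (bound := fun _ => 1) ?_ ?_ (integrable_const _) ?_
  · intro s _; fun_prop
  · intro s hs
    filter_upwards [IsNNProb.ae_nonneg h.supp] with x hx
    rw [Real.norm_eq_abs, abs_of_pos (Real.exp_pos _), Real.exp_le_one_iff]
    have := mul_nonneg hs hx
    linarith
  · exact ae_of_all _ fun x => by fun_prop

/-- Subordination: `ρ̂ ∘ σ` is a Laplace transform for every law `ρ` on `[0,∞)`. -/
lemma exists_subord {F FT ρ : Measure ℝ} {μ : ℝ} (h : HasMoments μ F) (hμ : 0 ≤ μ)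
    (hT : IsNNProb FT) (hρ : IsNNProb ρ) :
    ∃ G, IsNNProb G ∧ ∀ s, 0 ≤ s → LS G s = LS ρ (sigmaT F FT μ s) := by
  have := hT.prob
  have hp : ∀ n : ℕ, 0 < 1 / ((n : ℝ) + 1) := fun n => by positivity
  have hex : ∀ n : ℕ, ∃ G, IsNNProb G ∧ ∀ s, 0 ≤ s →
      LS G s = LS ρ (∫ t, sigInt F μ s (max t (1 / ((n : ℝ) + 1))) ∂FT) := by
    intro n
    obtain ⟨h1, h2, h3⟩ := levyTrunc_prop h hT (hp n)
    obtain ⟨G, hG, hG2⟩ := exists_compound hρ h2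
    exact ⟨G, hG, fun s hs => by rw [hG2 s hs, h3 s hs]⟩
  choose ν hν hν2 using hex
  have hnn : ∀ (n : ℕ) s, 0 ≤ s → 0 ≤ ∫ t, sigInt F μ s (max t (1 / ((n : ℝ) + 1))) ∂FT :=
    fun n s hs => integral_nonneg fun t =>
      h.sigInt_nonneg hμ hs (le_max_of_le_right (hp n).le)
  have hcont := LS_continuousOn hρ
  -- Tightness is uniform because every truncated exponent is at most `μ s`.
  refine exists_of_tendsto_LS hν (k := fun s => 1 - LS ρ (μ * s)) ?_ ?_ ?_
  · have h1 : Tendsto (fun s : ℝ => μ * s) (𝓝[>] 0) (𝓝[≥] 0) := by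
      refine tendsto_nhdsWithin_iff.2 ⟨?_, ?_⟩
      · have : Tendsto (fun s : ℝ => μ * s) (𝓝 0) (𝓝 (μ * 0)) := by
          exact Continuous.tendsto (by fun_prop) _
        rw [mul_zero] at this
        exact this.mono_left nhdsWithin_le_nhds
      · filter_upwards [self_mem_nhdsWithin] with s hs
        exact mul_nonneg hμ (le_of_lt hs)
    have h2 := ((hcont 0 (mem_Ici.2 le_rfl)).tendsto.comp h1).const_sub 1
    rw [LS_zero hρ.prob, sub_self] at h2
    exact h2
  · intro n s hs
    have hle : ∫ t, sigInt F μ s (max t (1 / ((n : ℝ) + 1))) ∂FT ≤ μ * s := by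
      have e : ∫ _, μ * s ∂FT = μ * s := by simp
      rw [← e]
      refine integral_mono_of_nonneg (ae_of_all _ fun t =>
        h.sigInt_nonneg hμ hs.le (le_max_of_le_right (hp n).le)) (integrable_const _)
        (ae_of_all _ fun t => h.sigInt_le hs.le (le_max_of_le_right (hp n).le))
    rw [hν2 n s hs.le]
    have := LS_anti hρ (hnn n s hs.le) hle
    linarith
  · intro s hs
    have h1 := (hcont _ (mem_Ici.2 (h.sigmaT_nonneg hμ hT hs))).tendsto
    have h2 : Tendsto (fun n : ℕ => ∫ t, sigInt F μ s (max t (1 / ((n : ℝ) + 1))) ∂FT) atTop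
        (𝓝[Ici 0] (sigmaT F FT μ s)) :=
      tendsto_nhdsWithin_iff.2 ⟨levyTrunc_limit h hμ hT hs,
        Eventually.of_forall fun n => hnn n s hs⟩
    exact (h1.comp h2).congr fun n => (hν2 n s hs).symm

/-! ### The gamma mixture -/

/-- Gamma integrals by comparison of densities: if `f` times the gamma density of shape `a` is `c`
times another gamma density, then `f` has expectation `c`. -/
lemma gamma_lintegral {a b r : ℝ} (hb : 0 < b) (hr : 0 < r) {f : ℝ → ℝ} {c : ℝ} (hc : 0 ≤ c)
    (hf : Measurable f) (hf0 : ∀ x, 0 < x → 0 ≤ f x)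
    (h : ∀ x, 0 < x → f x * ProbabilityTheory.gammaPDFReal a 1 x
      = c * ProbabilityTheory.gammaPDFReal b r x) :
    ∫⁻ x, ENNReal.ofReal (f x) ∂(ProbabilityTheory.gammaMeasure a 1) = ENNReal.ofReal c := by
  have hm : Measurable (ProbabilityTheory.gammaPDF a 1) := by
    unfold ProbabilityTheory.gammaPDF; fun_prop
  have hm2 : Measurable (ProbabilityTheory.gammaPDF b r) := by
    unfold ProbabilityTheory.gammaPDF; fun_prop
  unfold ProbabilityTheory.gammaMeasure
  rw [lintegral_withDensity_eq_lintegral_mul _ hm (by fun_prop)]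
  have : ∫⁻ x, ENNReal.ofReal c * ProbabilityTheory.gammaPDF b r x = ENNReal.ofReal c := by
    rw [lintegral_const_mul _ hm2, ProbabilityTheory.lintegral_gammaPDF_eq_one hb hr, mul_one]
  rw [← this]
  refine lintegral_congr_ae ?_
  have h0 : ∀ᵐ x : ℝ, x ≠ 0 := by simp [ae_iff]
  filter_upwards [h0] with x hx
  simp only [Pi.mul_apply]
  rcases lt_or_gt_of_ne hx with hx | hx
  · rw [ProbabilityTheory.gammaPDF_of_neg hx, ProbabilityTheory.gammaPDF_of_neg hx]; simp
  · unfold ProbabilityTheory.gammaPDF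
    rw [mul_comm, ← ENNReal.ofReal_mul (hf0 x hx), h x hx, ENNReal.ofReal_mul hc]

lemma gamma_exp {a s : ℝ} (ha : 0 < a) (hs : 0 ≤ s) :
    ∫⁻ x, ENNReal.ofReal (Real.exp (-(s * x))) ∂(ProbabilityTheory.gammaMeasure a 1)
      = ENNReal.ofReal ((1 + s) ^ (-a)) := by
  have h1 : 0 < 1 + s := by linarith
  refine gamma_lintegral (b := a) (r := 1 + s) ha h1 (by positivity) (by fun_prop)
    (fun x _ => by positivity) fun x hx => ?_
  simp only [ProbabilityTheory.gammaPDFReal, hx.le, if_true]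
  have e : Real.exp (-((1 + s) * x)) = Real.exp (-(1 * x)) * Real.exp (-(s * x)) := by
    rw [← Real.exp_add]; congr 1; ring
  rw [e, Real.one_rpow, Real.rpow_neg h1.le]
  have := (Real.rpow_pos_of_pos h1 a).ne'
  field_simp

lemma gamma_m1 {a : ℝ} (ha : 0 < a) :
    ∫⁻ x, ENNReal.ofReal x ∂(ProbabilityTheory.gammaMeasure a 1) = ENNReal.ofReal a := by
  refine gamma_lintegral (b := a + 1) (r := 1) (by positivity) one_pos ha.le (by fun_prop)
    (fun x hx => hx.le) fun x hx => ?_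
  simp only [ProbabilityTheory.gammaPDFReal, hx.le, if_true, Real.one_rpow]
  rw [Real.Gamma_add_one ha.ne', add_sub_right_comm, Real.rpow_add_one hx.ne']
  have := (Real.Gamma_pos_of_pos ha).ne'
  field_simp

lemma gamma_m2 {a : ℝ} (ha : 0 < a) :
    ∫⁻ x, ENNReal.ofReal (x ^ 2) ∂(ProbabilityTheory.gammaMeasure a 1)
      = ENNReal.ofReal (a * (a + 1)) := by
  refine gamma_lintegral (b := a + 1 + 1) (r := 1) (by positivity) one_pos (by positivity)
    (by fun_prop) (fun x hx => by positivity) fun x hx => ?_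
  simp only [ProbabilityTheory.gammaPDFReal, hx.le, if_true, Real.one_rpow]
  rw [Real.Gamma_add_one (by positivity), Real.Gamma_add_one ha.ne',
    show a + 1 + 1 - 1 = a - 1 + 1 + 1 by ring, Real.rpow_add_one hx.ne',
    Real.rpow_add_one hx.ne']
  have := (Real.Gamma_pos_of_pos ha).ne'
  field_simp

lemma gamma_nn {a : ℝ} (ha : 0 < a) : IsNNProb (ProbabilityTheory.gammaMeasure a 1) := by
  refine ⟨ProbabilityTheory.isProbabilityMeasure_gammaMeasure ha one_pos, ?_⟩
  unfold ProbabilityTheory.gammaMeasure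
  rw [withDensity_apply _ measurableSet_Iio]
  exact ProbabilityTheory.lintegral_gammaPDF_of_nonpos le_rfl

/-- The law of `Λ Γ`, with `Γ` a standard gamma variable of shape `a` independent of `Λ`. -/
noncomputable def gammaMix (FL : Measure ℝ) (a : ℝ) : Measure ℝ :=
  (FL.prod (ProbabilityTheory.gammaMeasure a 1)).map fun p => p.1 * p.2

lemma gammaMix_nn {FL : Measure ℝ} {a : ℝ} (hL : IsNNProb FL) (ha : 0 < a) :
    IsNNProb (gammaMix FL a) := by
  have := hL.prob
  have := (gamma_nn ha).prob
  refine IsNNProb.of_ae (Measure.isProbabilityMeasure_map (by fun_prop)) ?_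
  unfold gammaMix
  rw [ae_map_iff (by fun_prop) measurableSet_Ici]
  filter_upwards [Measure.quasiMeasurePreserving_fst.ae (IsNNProb.ae_nonneg hL.supp),
    Measure.quasiMeasurePreserving_snd.ae (IsNNProb.ae_nonneg (gamma_nn ha).supp)] with p h1 h2
  exact mul_nonneg h1 h2

lemma gammaMix_LS {FL : Measure ℝ} {a y : ℝ} (hL : IsNNProb FL) (ha : 0 < a) (hy : 0 ≤ y) :
    LS (gammaMix FL a) y = ∫ l, (1 + l * y) ^ (-a) ∂FL := by
  have := hL.prob
  have := (gamma_nn ha).prob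
  have hM := gammaMix_nn hL ha
  have := hM.prob
  have hn := IsNNProb.ae_nonneg hL.supp
  have h1 : lapENN (gammaMix FL a) y = ∫⁻ l, ENNReal.ofReal ((1 + l * y) ^ (-a)) ∂FL := by
    unfold lapENN gammaMix
    rw [lintegral_map (by fun_prop) (by fun_prop), lintegral_prod _ (by fun_prop)]
    refine lintegral_congr_ae ?_
    filter_upwards [hn] with l hl
    rw [← gamma_exp ha (mul_nonneg hl hy)]
    refine lintegral_congr fun g => ?_
    congr 3; ring
  rw [integral_eq_lintegral_of_nonneg_ae, ← h1, lapENN_eq hM.supp hy,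
    ENNReal.toReal_ofReal (LS_nonneg _ _)]
  · filter_upwards [hn] with l hl
    have : 0 ≤ 1 + l * y := by positivity
    simp only [Pi.zero_apply]; positivity
  · exact Measurable.aestronglyMeasurable (by fun_prop)

lemma gammaMix_moment {FL : Measure ℝ} {a : ℝ} (hL : IsNNProb FL) (ha : 0 < a) (k : ℕ) :
    ∫⁻ z, ENNReal.ofReal (z ^ k) ∂(gammaMix FL a) = (∫⁻ l, ENNReal.ofReal (l ^ k) ∂FL) *
      ∫⁻ x, ENNReal.ofReal (x ^ k) ∂(ProbabilityTheory.gammaMeasure a 1) := by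
  have := hL.prob
  have := (gamma_nn ha).prob
  unfold gammaMix
  rw [lintegral_map (by fun_prop) (by fun_prop),
    ← lintegral_prod_mul (f := fun l => ENNReal.ofReal (l ^ k))
      (g := fun x => ENNReal.ofReal (x ^ k)) (by fun_prop) (by fun_prop)]
  refine lintegral_congr_ae ?_
  filter_upwards [Measure.quasiMeasurePreserving_fst.ae (IsNNProb.ae_nonneg hL.supp)] with p h1
  rw [mul_pow, ENNReal.ofReal_mul (pow_nonneg h1 k)]

lemma gammaMix_m1 {FL : Measure ℝ} {a : ℝ} (hL : IsNNProb FL) (ha : 0 < a) :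
    ∫⁻ z, ENNReal.ofReal z ∂(gammaMix FL a) = (∫⁻ l, ENNReal.ofReal l ∂FL) * ENNReal.ofReal a := by
  have := gammaMix_moment hL ha 1
  simp only [pow_one] at this
  rw [this, gamma_m1 ha]

lemma gammaMix_m2 {FL : Measure ℝ} {a : ℝ} (hL : IsNNProb FL) (ha : 0 < a) :
    ∫⁻ z, ENNReal.ofReal (z ^ 2) ∂(gammaMix FL a)
      = (∫⁻ l, ENNReal.ofReal (l ^ 2) ∂FL) * ENNReal.ofReal (a * (a + 1)) := by
  rw [gammaMix_moment hL ha 2, gamma_m2 ha]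

/-! ### Expansion of the functional equation at `0` -/

/-- If `sₙ → 0+` and `vₙ/sₙ` has a positive limit, then `vₙ` tends to `0` through positive values. -/
lemma pos_seq_of_ratio {s v : ℕ → ℝ} {c : ℝ} (hc : 0 < c) (hs : Tendsto s atTop (𝓝[>] 0))
    (hv : Tendsto (fun n => v n / s n) atTop (𝓝 c)) : Tendsto v atTop (𝓝[>] 0) := by
  have hpos : ∀ᶠ n in atTop, 0 < s n := hs.eventually self_mem_nhdsWithin
  have hs0 : Tendsto s atTop (𝓝 0) := hs.mono_right nhdsWithin_le_nhds
  refine tendsto_nhdsWithin_iff.2 ⟨?_, ?_⟩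
  · have := hv.mul hs0
    rw [mul_zero] at this
    refine this.congr' ?_
    filter_upwards [hpos] with n hn
    exact div_mul_cancel₀ _ hn.ne'
  · filter_upwards [hpos, hv.eventually (Ioi_mem_nhds hc)] with n hn h2
    have := mul_pos (mem_Ioi.1 h2) hn
    rwa [div_mul_cancel₀ _ hn.ne'] at this

lemma sigmaB_ratio {FB : Measure ℝ} (hB : IsNNProb FB) {v : ℕ → ℝ}
    (hv : Tendsto v atTop (𝓝[>] 0)) :
    Tendsto (fun n => sigmaB FB (v n) / v n) atTop (𝓝 1) := by
  have hpos : ∀ᶠ n in atTop, 0 < v n := hv.eventually self_mem_nhdsWithin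
  refine ((HasMoments.dirac zero_le_one).sigmaT_first_limit zero_le_one hB hv).congr' ?_
  filter_upwards [hpos] with n hn
  rw [sigmaB_eq hB hn.le]

lemma ratio_comp {s v y : ℕ → ℝ} {c : ℝ} (hv : Tendsto v atTop (𝓝[>] 0))
    (h1 : Tendsto (fun n => v n / s n) atTop (𝓝 c))
    (h2 : Tendsto (fun n => y n / v n) atTop (𝓝 1)) :
    Tendsto (fun n => y n / s n) atTop (𝓝 c) := by
  have hpos : ∀ᶠ n in atTop, 0 < v n := hv.eventually self_mem_nhdsWithin
  have := h2.mul h1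
  rw [one_mul] at this
  refine this.congr' ?_
  filter_upwards [hpos] with n hn
  field_simp

section Moments

variable {F FT FB ρ : Measure ℝ} {μ : ℝ}

/-- First-order expansion at `0`: the directing law of a solution has mean `1`. -/
lemma moment_one (h : HasMoments μ F) (hμ : 0 < μ) (hT : IsNNProb FT) (hB : IsNNProb FB)
    (hρ : IsNNProb ρ)
    (hE : ∀ s, 0 ≤ s → LS F s = LS ρ (sigmaB FB (sigmaT F FT μ s))) :
    ∫⁻ x, ENNReal.ofReal x ∂ρ = 1 := by
  have hs := tendsto_one_div_succ
  set s : ℕ → ℝ := fun n : ℕ => 1 / ((n : ℝ) + 1)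
  have hpos : ∀ᶠ n in atTop, 0 < s n := hs.eventually self_mem_nhdsWithin
  have v1 := h.sigmaT_first_limit hμ.le hT hs
  have v0 := pos_seq_of_ratio hμ hs v1
  have y1 := ratio_comp v0 v1 (sigmaB_ratio hB v0)
  have y0 := pos_seq_of_ratio hμ hs y1
  have ypos : ∀ᶠ n in atTop, 0 < sigmaB FB (sigmaT F FT μ (s n)) :=
    y0.eventually self_mem_nhdsWithin
  have l1 := LS_first_limit h.nn hs
  have e1 : ∫⁻ x, ENNReal.ofReal x ∂F = ENNReal.ofReal μ := by
    rw [← h.mean, ofReal_integral_eq_lintegral_ofReal h.int1 (IsNNProb.ae_nonneg h.nn.supp)]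
  rw [e1] at l1
  have hμ0 : ENNReal.ofReal μ ≠ 0 := by simpa using hμ
  have l2 := ENNReal.Tendsto.mul (LS_first_limit hρ y0) (Or.inr ENNReal.ofReal_ne_top)
    ((ENNReal.continuous_ofReal.tendsto _).comp y1) (Or.inl hμ0)
  have e2 : (∫⁻ x, ENNReal.ofReal x ∂ρ) * ENNReal.ofReal μ = ENNReal.ofReal μ := by
    refine tendsto_nhds_unique (l2.congr' ?_) l1
    filter_upwards [hpos, ypos] with n hn hy
    simp only [Function.comp_apply]
    rw [← ENNReal.ofReal_mul (div_nonneg (sub_nonneg.2 (LS_le_one hρ hy.le)) hy.le), hE _ hn.le]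
    congr 1
    field_simp
  rw [← ENNReal.mul_left_inj hμ0 ENNReal.ofReal_ne_top, e2, one_mul]

/-- If the `k`-th moment is finite, it is given by a convergent Bochner integral. -/
lemma moment_of_lintegral {ρ : Measure ℝ} (hρ : IsNNProb ρ) {k : ℕ}
    (h : ∫⁻ x, ENNReal.ofReal (x ^ k) ∂ρ ≠ ⊤) :
    Integrable (fun x => x ^ k) ρ ∧
      ∫ x, x ^ k ∂ρ = (∫⁻ x, ENNReal.ofReal (x ^ k) ∂ρ).toReal := by
  have h0 : ∀ᵐ x ∂ρ, 0 ≤ x ^ k := (IsNNProb.ae_nonneg hρ.supp).mono fun x hx => pow_nonneg hx k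
  refine ⟨⟨by fun_prop, ?_⟩, integral_eq_lintegral_of_nonneg_ae h0 (by fun_prop)⟩
  rw [hasFiniteIntegral_iff_ofReal h0]
  exact lt_top_iff_ne_top.2 h

lemma mean_of_lintegral {ρ : Measure ℝ} (hρ : IsNNProb ρ)
    (h : ∫⁻ x, ENNReal.ofReal x ∂ρ ≠ ⊤) :
    Integrable (fun x => x) ρ ∧ ∫ x, x ∂ρ = (∫⁻ x, ENNReal.ofReal x ∂ρ).toReal := by
  have := moment_of_lintegral hρ (k := 1)
  simp only [pow_one] at this
  exact this h

/-- Second-order expansion at `0`, as an identity in `[0,∞]`. -/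
lemma moment_two (h : HasMoments μ F) (hμ : 0 < μ) (hT : IsNNProb FT) (hB : IsNNProb FB)
    (hρ : IsNNProb ρ)
    (hE : ∀ s, 0 ≤ s → LS F s = LS ρ (sigmaB FB (sigmaT F FT μ s))) :
    ∫⁻ x, ENNReal.ofReal (x ^ 2) ∂F = (∫⁻ x, ENNReal.ofReal (x ^ 2) ∂ρ) * ENNReal.ofReal (μ ^ 2)
      + (∫⁻ x, ENNReal.ofReal x ∂FT) * (∫⁻ x, ENNReal.ofReal (x ^ 2) ∂F)
      + (∫⁻ x, ENNReal.ofReal x ∂FB) * ENNReal.ofReal (μ ^ 2) := by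
  have m1 := moment_one h hμ hT hB hρ hE
  obtain ⟨hi, hm⟩ := mean_of_lintegral hρ (by rw [m1]; simp)
  rw [m1, ENNReal.toReal_one] at hm
  have hs := tendsto_one_div_succ
  set s : ℕ → ℝ := fun n : ℕ => 1 / ((n : ℝ) + 1)
  have hpos : ∀ᶠ n in atTop, 0 < s n := hs.eventually self_mem_nhdsWithin
  have v1 := h.sigmaT_first_limit hμ.le hT hs
  have v0 := pos_seq_of_ratio hμ hs v1
  have y1 := ratio_comp v0 v1 (sigmaB_ratio hB v0)
  have y0 := pos_seq_of_ratio hμ hs y1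
  have ypos : ∀ᶠ n in atTop, 0 < sigmaB FB (sigmaT F FT μ (s n)) :=
    y0.eventually self_mem_nhdsWithin
  have vpos : ∀ᶠ n in atTop, 0 < sigmaT F FT μ (s n) := v0.eventually self_mem_nhdsWithin
  have hμ2 : ENNReal.ofReal (μ ^ 2) ≠ 0 := by simpa using (by positivity : μ ≠ 0)
  have lF := LS_second_limit h.nn h.int1 hs
  rw [h.mean] at lF
  have lρ := ENNReal.Tendsto.mul (LS_second_limit hρ hi y0) (Or.inr ENNReal.ofReal_ne_top)
    ((ENNReal.continuous_ofReal.tendsto _).comp (y1.pow 2)) (Or.inl hμ2)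
  rw [hm] at lρ
  have lT := h.sigmaT_second_limit hμ.le hT hs
  have lB := ENNReal.Tendsto.mul
    ((HasMoments.dirac zero_le_one).sigmaT_second_limit zero_le_one hB v0)
    (Or.inr ENNReal.ofReal_ne_top)
    ((ENNReal.continuous_ofReal.tendsto _).comp (v1.pow 2)) (Or.inl hμ2)
  -- The three nonnegative brackets add up to `(F̂(s) - 1 + μ s)/s²` exactly.
  have key := tendsto_nhds_unique (((lρ.add lT).add lB).congr' (by
    filter_upwards [hpos, ypos, vpos] with n hn hy hv
    simp only [Function.comp_apply]
    have a1 := LS_defect_nonneg hρ hi hy.le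
    rw [hm] at a1
    have a2 := h.sigmaT_le hμ.le hT hn.le
    have a3 := (HasMoments.dirac zero_le_one).sigmaT_le zero_le_one hB hv.le
    rw [← sigmaB_eq hB hv.le] at a3 ⊢
    have b1 := div_nonneg a1 (sq_nonneg (sigmaB FB (sigmaT F FT μ (s n))))
    have b2 := div_nonneg (sub_nonneg.2 a2) (sq_nonneg (s n))
    have b3 := div_nonneg (sub_nonneg.2 a3) (sq_nonneg (sigmaT F FT μ (s n)))
    rw [← ENNReal.ofReal_mul b1, ← ENNReal.ofReal_mul b3,
      ← ENNReal.ofReal_add (mul_nonneg b1 (sq_nonneg _)) b2,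
      ← ENNReal.ofReal_add (add_nonneg (mul_nonneg b1 (sq_nonneg _)) b2)
        (mul_nonneg b3 (sq_nonneg _)), hE _ hn.le]
    congr 1
    field_simp
    ring)) lF
  have hd : ∫⁻ x, ENNReal.ofReal (x ^ 2) ∂(Measure.dirac (1:ℝ)) = 1 := by
    rw [lintegral_dirac' _ (by fun_prop)]; simp
  rw [hd] at key
  have h2 : ∀ x : ℝ≥0∞, x / 2 * 2 = x := fun x => ENNReal.div_mul_cancel (by simp) (by simp)
  refine (h2 _).symm.trans ?_
  rw [← key, add_mul, add_mul]
  congr 1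
  · congr 1
    · rw [mul_right_comm, h2]
    · rw [mul_assoc, h2]
  · rw [mul_right_comm, mul_assoc _ _ (2 : ℝ≥0∞), h2, mul_one]

end Moments

/-! ### Contraction and the fixed point -/

section FixedPoint

variable {F G FT FB ρ : Measure ℝ} {μ : ℝ}

/-- One step of the iteration: the right-hand side of the functional equation is again the
transform of a law with mean `μ` and finite second moment. -/
lemma exists_next (h : HasMoments μ F) (hμ : 0 ≤ μ) (hT : IsNNProb FT)
    (hTi : Integrable (fun t => t) FT) (hB : IsNNProb FB) (hBi : Integrable (fun t => t) FB)
    (hρ : HasMoments 1 ρ) :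
    ∃ G, HasMoments μ G ∧ ∀ s, 0 ≤ s → LS G s = LS ρ (sigmaB FB (sigmaT F FT μ s)) := by
  obtain ⟨ρ', hρ', e1⟩ := exists_subord (HasMoments.dirac zero_le_one) zero_le_one hB hρ.nn
  obtain ⟨G, hG, e2⟩ := exists_subord h hμ hT hρ'
  have e3 : ∀ s, 0 ≤ s → LS G s = LS ρ (sigmaB FB (sigmaT F FT μ s)) := by
    intro s hs
    have hv := h.sigmaT_nonneg hμ hT hs
    rw [e2 s hs, e1 _ hv, sigmaB_eq hB hv]
  refine ⟨G, ?_, e3⟩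
  have hET : 0 ≤ ∫ t, t ∂FT := integral_nonneg_of_ae (IsNNProb.ae_nonneg hT.supp)
  have hEB : 0 ≤ ∫ t, t ∂FB := integral_nonneg_of_ae (IsNNProb.ae_nonneg hB.supp)
  have hm2 : 0 ≤ ∫ x, x ^ 2 ∂ρ := integral_nonneg fun x => sq_nonneg x
  refine HasMoments.of_bound hG hμ (C := (∫ x, x ^ 2 ∂ρ) / 2 * μ ^ 2
    + (∫ t, t ∂FT) * ((∫ x, x ^ 2 ∂F) / 2) + (∫ t, t ∂FB) * (1 / 2) * μ ^ 2) fun s hs => ?_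
  have hv := h.sigmaT_nonneg hμ hT hs
  have hv1 := h.sigmaT_le hμ hT hs
  have hv2 := h.sigmaT_defect_le hμ hT hTi hs
  rw [e3 s hs]
  set v := sigmaT F FT μ s
  have hD := HasMoments.dirac (c := 1) zero_le_one
  have hy := hD.sigmaT_nonneg zero_le_one hB hv
  have hy1 := hD.sigmaT_le zero_le_one hB hv
  have hy2 := hD.sigmaT_defect_le zero_le_one hB hBi hv
  have hd : ∫ x, x ^ 2 ∂(Measure.dirac (1:ℝ)) = 1 := by simp
  rw [hd] at hy2
  rw [← sigmaB_eq hB hv] at hy hy1 hy2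
  set y := sigmaB FB v
  have r1 := LS_defect_nonneg hρ.nn hρ.int1 hy
  have r2 := LS_defect_le hρ.nn hρ.int1 hρ.int2 hy
  rw [hρ.mean] at r1 r2
  rw [abs_of_nonneg (by linarith)]
  have hvv : v ^ 2 ≤ μ ^ 2 * s ^ 2 := by rw [← mul_pow]; gcongr
  have hyy : y ^ 2 ≤ μ ^ 2 * s ^ 2 := le_trans (by gcongr; linarith) hvv
  have k1 := mul_le_mul_of_nonneg_left hyy (by positivity : 0 ≤ (∫ x, x ^ 2 ∂ρ) / 2)
  have k2 := mul_le_mul_of_nonneg_left hvv (by positivity : 0 ≤ (∫ t, t ∂FB) * (1 / 2))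
  linarith

/-- The iteration contracts the distance `sup |F̂ - Ĝ| / s²` by the factor `E[T]`. -/
lemma next_contract (h : HasMoments μ F) (hG : HasMoments μ G) (hμ : 0 ≤ μ) (hT : IsNNProb FT)
    (hTi : Integrable (fun t => t) FT) (hB : IsNNProb FB) (hρ : HasMoments 1 ρ) {D : ℝ}
    (hD : ∀ s, 0 ≤ s → |LS F s - LS G s| ≤ D * s ^ 2) {s : ℝ} (hs : 0 ≤ s) :
    |LS ρ (sigmaB FB (sigmaT F FT μ s)) - LS ρ (sigmaB FB (sigmaT G FT μ s))|
      ≤ ((∫ t, t ∂FT) * D) * s ^ 2 := by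
  have h1 := h.sigmaT_nonneg hμ hT hs
  have h2 := hG.sigmaT_nonneg hμ hT hs
  have hd := HasMoments.dirac (c := 1) zero_le_one
  have y1 := hd.sigmaT_nonneg zero_le_one hB h1
  have y2 := hd.sigmaT_nonneg zero_le_one hB h2
  rw [← sigmaB_eq hB h1] at y1
  rw [← sigmaB_eq hB h2] at y2
  have l := LS_lip hρ.nn hρ.int1 y1 y2
  rw [hρ.mean, one_mul] at l
  exact (l.trans (sigmaB_lip hB h1 h2)).trans (h.sigmaT_contract hG hμ hT hTi hD hs)

/-- Two laws with the same mean and finite second moments are at finite distance. -/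
lemma dist_bound (h : HasMoments μ F) (hG : HasMoments μ G) :
    ∃ D, ∀ s, 0 ≤ s → |LS F s - LS G s| ≤ D * s ^ 2 := by
  refine ⟨(∫ x, x ^ 2 ∂F) / 2 + (∫ x, x ^ 2 ∂G) / 2, fun s hs => ?_⟩
  have a1 := LS_defect_nonneg h.nn h.int1 hs
  have a2 := LS_defect_le h.nn h.int1 h.int2 hs
  have b1 := LS_defect_nonneg hG.nn hG.int1 hs
  have b2 := LS_defect_le hG.nn hG.int1 hG.int2 hs
  rw [h.mean] at a1 a2
  rw [hG.mean] at b1 b2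
  rw [abs_le]
  constructor <;> linarith

/-- The distance of two solutions is at most `E[T]ⁿ` times itself for all `n`, so it vanishes. -/
lemma fixed_unique (h : HasMoments μ F) (hG : HasMoments μ G) (hμ : 0 ≤ μ) (hT : IsNNProb FT)
    (hTi : Integrable (fun t => t) FT) (hq : ∫ t, t ∂FT < 1) (hB : IsNNProb FB)
    (hρ : HasMoments 1 ρ)
    (hE : ∀ s, 0 ≤ s → LS F s = LS ρ (sigmaB FB (sigmaT F FT μ s)))
    (hE' : ∀ s, 0 ≤ s → LS G s = LS ρ (sigmaB FB (sigmaT G FT μ s))) : F = G := by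
  obtain ⟨D, hD⟩ := dist_bound h hG
  have hq0 : 0 ≤ ∫ t, t ∂FT := integral_nonneg_of_ae (IsNNProb.ae_nonneg hT.supp)
  have hn : ∀ n : ℕ, ∀ s, 0 ≤ s → |LS F s - LS G s| ≤ ((∫ t, t ∂FT) ^ n * D) * s ^ 2 := by
    intro n
    induction n with
    | zero => simpa using hD
    | succ n ih =>
      intro s hs
      have := next_contract h hG hμ hT hTi hB hρ ih hs
      rw [← hE s hs, ← hE' s hs] at this
      rw [pow_succ', mul_assoc (∫ t, t ∂FT)]
      exact this
  refine IsNNProb.ext_LS h.nn hG.nn fun s hs => ?_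
  have hl : Tendsto (fun n : ℕ => ((∫ t, t ∂FT) ^ n * D) * s ^ 2) atTop (𝓝 0) := by
    have := ((tendsto_pow_atTop_nhds_zero_of_lt_one hq0 hq).mul_const D).mul_const (s ^ 2)
    simpa using this
  have h0 := ge_of_tendsto' hl fun n => hn n s hs
  exact sub_eq_zero.1 (abs_nonpos_iff.1 h0)

/-- The iterates started from the point mass at `μ` have uniformly Cauchy transforms relative to
`s²`; by the continuity theorem the limit is the transform of a law, which solves the equation. -/
lemma fixed_exists (hμ : 0 ≤ μ) (hT : IsNNProb FT)
    (hTi : Integrable (fun t => t) FT) (hq : ∫ t, t ∂FT < 1) (hB : IsNNProb FB)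
    (hBi : Integrable (fun t => t) FB) (hρ : HasMoments 1 ρ) :
    ∃ F, HasMoments μ F ∧ ∀ s, 0 ≤ s → LS F s = LS ρ (sigmaB FB (sigmaT F FT μ s)) := by
  have hq0 : 0 ≤ ∫ t, t ∂FT := integral_nonneg_of_ae (IsNNProb.ae_nonneg hT.supp)
  set q := ∫ t, t ∂FT with hqdef
  have hnext : ∀ F : {F : Measure ℝ // HasMoments μ F}, ∃ G : {F : Measure ℝ // HasMoments μ F},
      ∀ s, 0 ≤ s → LS G.1 s = LS ρ (sigmaB FB (sigmaT F.1 FT μ s)) := by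
    intro F
    obtain ⟨G, hG, hG2⟩ := exists_next F.2 hμ hT hTi hB hBi hρ
    exact ⟨⟨G, hG⟩, hG2⟩
  choose Φ hΦ using hnext
  let X : ℕ → {F : Measure ℝ // HasMoments μ F} := fun n => Φ^[n] ⟨_, HasMoments.dirac hμ⟩
  have hX : ∀ n s, 0 ≤ s → LS (X (n + 1)).1 s = LS ρ (sigmaB FB (sigmaT (X n).1 FT μ s)) := by
    intro n s hs
    simp only [X, Function.iterate_succ_apply']
    exact hΦ _ s hs
  obtain ⟨D, hD⟩ := dist_bound (X 0).2 (X 1).2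
  have hn : ∀ n : ℕ, ∀ s, 0 ≤ s →
      |LS (X n).1 s - LS (X (n + 1)).1 s| ≤ (q ^ n * D) * s ^ 2 := by
    intro n
    induction n with
    | zero => simpa using hD
    | succ n ih =>
      intro s hs
      have := next_contract (X n).2 (X (n + 1)).2 hμ hT hTi hB hρ ih hs
      rw [← hX _ s hs, ← hX _ s hs] at this
      rw [pow_succ', mul_assoc q]
      exact this
  have hn' : ∀ s, 0 ≤ s → ∀ n : ℕ,
      dist (LS (X n).1 s) (LS (X (n + 1)).1 s) ≤ (D * s ^ 2) * q ^ n := by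
    intro s hs n
    rw [Real.dist_eq]
    exact (hn n s hs).trans_eq (by ring)
  have hlim : ∀ s, ∃ g, 0 ≤ s → Tendsto (fun n => LS (X n).1 s) atTop (𝓝 g) := by
    intro s
    by_cases hs : 0 ≤ s
    · obtain ⟨g, hg⟩ := cauchySeq_tendsto_of_complete
        (cauchySeq_of_le_geometric q (D * s ^ 2) hq (hn' s hs))
      exact ⟨g, fun _ => hg⟩
    · exact ⟨0, fun h => absurd h hs⟩
  choose g hg using hlim
  obtain ⟨G, hG, hGg⟩ := exists_of_tendsto_LS (fun n => (X n).2.nn) (g := g) (k := fun s => μ * s)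
    (by
      have : Tendsto (fun s : ℝ => μ * s) (𝓝 0) (𝓝 (μ * 0)) := Continuous.tendsto (by fun_prop) _
      rw [mul_zero] at this
      exact this.mono_left nhdsWithin_le_nhds)
    (fun n s hs => by
      have := one_sub_LS_le (X n).2.nn (X n).2.int1 hs.le
      rwa [(X n).2.mean] at this) hg
  have hdist : ∀ n s, 0 ≤ s → |LS (X n).1 s - LS G s| ≤ (q ^ n * (D / (1 - q))) * s ^ 2 := by
    intro n s hs
    have := dist_le_of_le_geometric_of_tendsto q (D * s ^ 2) hq (hn' s hs) (hg s hs) n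
    rw [Real.dist_eq] at this
    rw [hGg s hs]
    exact this.trans_eq (by ring)
  have hGm : HasMoments μ G := by
    refine HasMoments.of_bound hG hμ (C := D / (1 - q) + (∫ x, x ^ 2 ∂(X 0).1) / 2) fun s hs => ?_
    have a0 := hdist 0 s hs
    have a1 := LS_defect_nonneg (X 0).2.nn (X 0).2.int1 hs
    have a2 := LS_defect_le (X 0).2.nn (X 0).2.int1 (X 0).2.int2 hs
    rw [(X 0).2.mean] at a1 a2
    rw [pow_zero, one_mul, abs_le] at a0
    rw [abs_le]
    constructor <;> linarith [a0.1, a0.2]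
  refine ⟨G, hGm, fun s hs => ?_⟩
  have l1 : Tendsto (fun n => LS (X (n + 1)).1 s) atTop (𝓝 (LS G s)) := by
    rw [hGg s hs]
    exact (hg s hs).comp (tendsto_add_atTop_nat 1)
  refine tendsto_nhds_unique l1 ?_
  rw [tendsto_iff_dist_tendsto_zero]
  have hl : Tendsto (fun n : ℕ => (q * (q ^ n * (D / (1 - q)))) * s ^ 2) atTop (𝓝 0) := by
    have := (((tendsto_pow_atTop_nhds_zero_of_lt_one hq0 hq).mul_const
      (D / (1 - q))).const_mul q).mul_const (s ^ 2)
    simpa using this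
  refine squeeze_zero (fun _ => dist_nonneg) (fun n => ?_) hl
  rw [Real.dist_eq, hX n s hs]
  exact next_contract (X n).2 hGm hμ hT hTi hB hρ (hdist n) hs

end FixedPoint

/-! ### Solutions and the moment conditions -/

/-- Solutions in terms of the gamma mixture directing law. -/
lemma sol_iff {FT FL FB F : Measure ℝ} {μ a : ℝ} (hμ : 0 < μ) (ha : 0 < a) (hT : IsNNProb FT)
    (hL : IsNNProb FL) (hB : IsNNProb FB) :
    Sol FT FL FB μ a F ↔ HasMoments μ F ∧
      ∀ s, 0 ≤ s → LS F s = LS (gammaMix FL a) (sigmaB FB (sigmaT F FT μ s)) := by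
  have hy : HasMoments μ F → ∀ s, 0 ≤ s → 0 ≤ sigmaB FB (sigmaT F FT μ s) := fun h s hs => by
    have h1 := h.sigmaT_nonneg hμ.le hT hs
    rw [sigmaB_eq hB h1]
    exact (HasMoments.dirac zero_le_one).sigmaT_nonneg zero_le_one hB h1
  constructor
  · rintro ⟨h1, h2, h3, h4, h5⟩
    have hi : Integrable (fun x => x) F := by
      by_contra hn
      rw [integral_undef hn] at h3
      exact hμ.ne h3
    have h : HasMoments μ F := ⟨⟨h1, h2⟩, hi, h3, h4⟩
    exact ⟨h, fun s hs => by rw [h5 s hs, gammaMix_LS hL ha (hy h s hs)]⟩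
  · rintro ⟨h, hE⟩
    exact ⟨h.nn.prob, h.nn.supp, h.mean, h.int2, fun s hs => by
      rw [hE s hs, gammaMix_LS hL ha (hy h s hs)]⟩

lemma second_ne_zero {ρ : Measure ℝ} (h : ∫⁻ x, ENNReal.ofReal x ∂ρ = 1) :
    ∫⁻ x, ENNReal.ofReal (x ^ 2) ∂ρ ≠ 0 := by
  intro h0
  rw [lintegral_eq_zero_iff (by fun_prop)] at h0
  have : ∫⁻ x, ENNReal.ofReal x ∂ρ = 0 := by
    rw [lintegral_eq_zero_iff (by fun_prop)]
    filter_upwards [h0] with x hx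
    have : x = 0 := by simpa using hx
    simp [this]
  simp [this] at h

/-- A solution forces the moment conditions. -/
lemma cond_of_sol {FT FL FB F : Measure ℝ} {μ a : ℝ} (hμ : 0 < μ) (ha : 0 < a)
    (hT : IsNNProb FT) (hL : IsNNProb FL) (hB : IsNNProb FB) (hS : Sol FT FL FB μ a F) :
    Cond FT FL FB a := by
  obtain ⟨h, hE⟩ := (sol_iff hμ ha hT hL hB).1 hS
  have hρ := gammaMix_nn hL ha
  have m1 := moment_one h hμ hT hB hρ hE
  have m2 := moment_two h hμ hT hB hρ hE
  have hR0 := second_ne_zero m1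
  have hU : ENNReal.ofReal (μ ^ 2) ≠ 0 := by simpa using hμ.ne'
  have hM : ∫⁻ x, ENNReal.ofReal (x ^ 2) ∂F ≠ ⊤ := by
    rw [← ofReal_integral_eq_lintegral_ofReal h.int2 (ae_of_all _ fun x => sq_nonneg x)]
    exact ENNReal.ofReal_ne_top
  have hRU : (∫⁻ x, ENNReal.ofReal (x ^ 2) ∂(gammaMix FL a)) * ENNReal.ofReal (μ ^ 2) ≠ ⊤ := by
    refine ne_top_of_le_ne_top hM ?_
    rw [m2, add_assoc]
    exact le_self_add
  have hBU : (∫⁻ x, ENNReal.ofReal x ∂FB) * ENNReal.ofReal (μ ^ 2) ≠ ⊤ := by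
    refine ne_top_of_le_ne_top hM ?_
    rw [m2]
    exact le_add_self
  refine ⟨?_, ?_, ?_, ?_⟩
  -- If `E[T] ≥ 1`, the finite `E[X²]` cancels and leaves `E[(ΛΓ)²] μ² ≤ 0`.
  · by_contra hT1
    have hle : ∫⁻ x, ENNReal.ofReal (x ^ 2) ∂F
        ≤ (∫⁻ x, ENNReal.ofReal x ∂FT) * ∫⁻ x, ENNReal.ofReal (x ^ 2) ∂F :=
      le_mul_of_one_le_left' (not_lt.1 hT1)
    have h2 : (∫⁻ x, ENNReal.ofReal (x ^ 2) ∂(gammaMix FL a)) * ENNReal.ofReal (μ ^ 2)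
        + (∫⁻ x, ENNReal.ofReal (x ^ 2) ∂F) ≤ 0 + ∫⁻ x, ENNReal.ofReal (x ^ 2) ∂F := by
      rw [zero_add]
      conv_rhs => rw [m2]
      exact le_add_right (add_le_add_right hle _)
    have h3 := (ENNReal.add_le_add_iff_right hM).1 h2
    exact mul_ne_zero hR0 hU (le_antisymm h3 zero_le)
  · rw [gammaMix_m1 hL ha] at m1
    rw [one_div, ENNReal.ofReal_inv_of_pos ha]
    exact ENNReal.eq_inv_of_mul_eq_one_left m1
  · have h1 := ENNReal.lt_top_of_mul_ne_top_left hRU hU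
    rw [gammaMix_m2 hL ha] at h1
    refine ENNReal.lt_top_of_mul_ne_top_left h1.ne ?_
    rw [Ne, ENNReal.ofReal_eq_zero, not_le]
    positivity
  · exact ENNReal.lt_top_of_mul_ne_top_left hBU hU

/-- Under the moment conditions `Λ Γ` has mean `1` and finite second moment. -/
lemma directing_moments {FT FL FB : Measure ℝ} {a : ℝ} (ha : 0 < a) (hL : IsNNProb FL)
    (hC : Cond FT FL FB a) : HasMoments 1 (gammaMix FL a) := by
  obtain ⟨-, h1, h2, -⟩ := hC
  have hρ := gammaMix_nn hL ha
  have m1 : ∫⁻ x, ENNReal.ofReal x ∂(gammaMix FL a) = 1 := by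
    rw [gammaMix_m1 hL ha, h1, ← ENNReal.ofReal_mul (by positivity), one_div,
      inv_mul_cancel₀ ha.ne', ENNReal.ofReal_one]
  have m2 : ∫⁻ x, ENNReal.ofReal (x ^ 2) ∂(gammaMix FL a) ≠ ⊤ := by
    rw [gammaMix_m2 hL ha]
    exact ENNReal.mul_ne_top h2.ne ENNReal.ofReal_ne_top
  obtain ⟨i1, e1⟩ := mean_of_lintegral hρ (by rw [m1]; simp)
  exact ⟨hρ, i1, by rw [e1, m1, ENNReal.toReal_one], (moment_of_lintegral hρ m2).1⟩

/-- The variance formula, by solving the second-order identity for `E[X²]`. -/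
lemma variance_of_sol {FT FL FB F : Measure ℝ} {μ a : ℝ} (hμ : 0 < μ) (ha : 0 < a)
    (hT : IsNNProb FT) (hL : IsNNProb FL) (hB : IsNNProb FB) (hC : Cond FT FL FB a)
    (hS : Sol FT FL FB μ a F) :
    (∫ x, x ^ 2 ∂F) - (∫ x, x ∂F) ^ 2 =
        (a ^ 2 * ((∫ l, l ^ 2 ∂FL) - (∫ l, l ∂FL) ^ 2) + a * (∫ l, l ^ 2 ∂FL) +
            (∫ b, b ∂FB) + (∫ t, t ∂FT)) / (1 - (∫ t, t ∂FT)) * μ ^ 2 := by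
  obtain ⟨h, hE⟩ := (sol_iff hμ ha hT hL hB).1 hS
  obtain ⟨c1, c2, c3, c4⟩ := hC
  have m2 := moment_two h hμ hT hB (gammaMix_nn hL ha) hE
  rw [gammaMix_m2 hL ha] at m2
  have hM : ∫⁻ x, ENNReal.ofReal (x ^ 2) ∂F ≠ ⊤ := by
    rw [← ofReal_integral_eq_lintegral_ofReal h.int2 (ae_of_all _ fun x => sq_nonneg x)]
    exact ENNReal.ofReal_ne_top
  have eF := (moment_of_lintegral h.nn hM).2
  have eT := (mean_of_lintegral hT (c1.trans_le le_top).ne).2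
  have eB := (mean_of_lintegral hB c4.ne).2
  have eL := (mean_of_lintegral hL (by rw [c2]; exact ENNReal.ofReal_ne_top)).2
  have eL2 := (moment_of_lintegral hL c3.ne).2
  rw [c2, ENNReal.toReal_ofReal (by positivity)] at eL
  have hT1 : ∫ t, t ∂FT < 1 := by
    rw [eT]
    have := (ENNReal.toReal_lt_toReal (c1.trans_le le_top).ne ENNReal.one_ne_top).2 c1
    rwa [ENNReal.toReal_one] at this
  have k := congrArg ENNReal.toReal m2
  rw [ENNReal.toReal_add (by finiteness) (by finiteness),
    ENNReal.toReal_add (by finiteness) (by finiteness), ENNReal.toReal_mul, ENNReal.toReal_mul,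
    ENNReal.toReal_mul, ENNReal.toReal_mul, ENNReal.toReal_ofReal (by positivity),
    ENNReal.toReal_ofReal (by positivity), ← eF, ← eT, ← eB, ← eL2] at k
  rw [h.mean, eL]
  have hne : 1 - ∫ t, t ∂FT ≠ 0 := by linarith
  rw [div_mul_eq_mul_div, eq_div_iff hne]
  field_simp
  linear_combination k

end Auxiliary

/-- Theorem 3: the moment conditions hold iff the functional equation has exactly one
solution with mean `μ` and finite second moment; moreover, the solution has
variance `((a² Var[Λ] + a E[Λ²] + E[B] + E[T])/(1 − E[T])) μ²`. -/
theorem stmt6 (μ a : ℝ) (hμ : 0 < μ) (ha : 0 < a) (FT FL FB : Measure ℝ)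
    [IsProbabilityMeasure FT] [IsProbabilityMeasure FL] [IsProbabilityMeasure FB]
    (hT : FT (Set.Iio 0) = 0) (hL : FL (Set.Iio 0) = 0) (hB : FB (Set.Iio 0) = 0) :
    (Cond FT FL FB a ↔ (∃! F : Measure ℝ, Sol FT FL FB μ a F)) ∧
    (Cond FT FL FB a → ∀ F : Measure ℝ, Sol FT FL FB μ a F →
      (∫ x, x ^ 2 ∂F) - (∫ x, x ∂F) ^ 2 =
        (a ^ 2 * ((∫ l, l ^ 2 ∂FL) - (∫ l, l ∂FL) ^ 2) + a * (∫ l, l ^ 2 ∂FL) +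
            (∫ b, b ∂FB) + (∫ t, t ∂FT)) / (1 - (∫ t, t ∂FT)) * μ ^ 2) := by
  have nT : IsNNProb FT := ⟨inferInstance, hT⟩
  have nL : IsNNProb FL := ⟨inferInstance, hL⟩
  have nB : IsNNProb FB := ⟨inferInstance, hB⟩
  refine ⟨⟨fun hC => ?_, fun ⟨F, hF, _⟩ => cond_of_sol hμ ha nT nL nB hF⟩,
    fun hC F hF => variance_of_sol hμ ha nT nL nB hC hF⟩
  have hρ := directing_moments ha nL hC
  have hTt := (hC.1.trans_le le_top).ne
  obtain ⟨iT, eT⟩ := mean_of_lintegral nT hTt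
  obtain ⟨iB, -⟩ := mean_of_lintegral nB hC.2.2.2.ne
  have hq : ∫ t, t ∂FT < 1 := by
    rw [eT]
    simpa using (ENNReal.toReal_lt_toReal hTt ENNReal.one_ne_top).2 hC.1
  obtain ⟨F, hF, hE⟩ := fixed_exists hμ.le nT iT hq nB iB hρ
  refine ⟨F, (sol_iff hμ ha nT nL nB).2 ⟨hF, hE⟩, fun G hG => ?_⟩
  obtain ⟨hG1, hG2⟩ := (sol_iff hμ ha nT nL nB).1 hG
  exact fixed_unique hG1 hF hμ.le nT iT hq nB hρ hG2 hE
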